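/- Let N ≥ 5, 1 ≤ k ≤ N−2 and σ ∈ (0,2), and let w be a positive ground state for S_{N,σ}. Then the integrals ∫_{ℝ^N} |t|² |∇w|² dx, ∫_{ℝ^N} w² dx and ∫_{ℝ^N} |t|² |z|^{−σ} w^{2*_σ} dx are finite and S_{N,σ} ∫_{ℝ^N} |t|² |z|^{−σ} w^{2*_σ} dx = ∫_{ℝ^N} |t|² |∇w|² dx − k ∫_{ℝ^N} w² dx. -/

import Mathlib

open MeasureTheory Filter Metric Set Bornology
open scoped Manifold

noncomputable section

abbrev Euc (N : ℕ) := EuclideanSpace ℝ (Fin N)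

/-- Euclidean norm of the `z`-component (the last `N - k` coordinates) of `x ∈ ℝ^N`. -/
def zNorm (N k : ℕ) (x : Euc N) : ℝ :=
  Real.sqrt (∑ i : Fin N, if k ≤ (i : ℕ) then (x i) ^ 2 else 0)

/-- Euclidean norm of the `t`-component (the first `k` coordinates) of `x ∈ ℝ^N`. -/
def tNorm (N k : ℕ) (x : Euc N) : ℝ :=
  Real.sqrt (∑ i : Fin N, if (i : ℕ) < k then (x i) ^ 2 else 0)

/-- The critical Hardy–Sobolev exponent `2*_σ = 2(N-σ)/(N-2)`. -/
def twoStar (N : ℕ) (σ : ℝ) : ℝ := 2 * ((N : ℝ) - σ) / ((N : ℝ) - 2)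

/-- Dirichlet energy `∫ |∇v|²`. -/
def gradL2 (N : ℕ) (v : Euc N → ℝ) : ℝ := ∫ x, ‖fderiv ℝ v x‖ ^ 2

/-- Hardy–Sobolev integral `∫ |z|^{-σ} |v|^{2*_σ}`. -/
def hsInt (N k : ℕ) (σ : ℝ) (v : Euc N → ℝ) : ℝ :=
  ∫ x, zNorm N k x ^ (-σ) * |v x| ^ twoStar N σ

/-- Membership in `D^{1,2}(ℝ^N)`, the completion of `C_c^∞(ℝ^N)` for the norm
`v ↦ (∫ |∇v|²)^{1/2}`: `v` is a limit of smooth compactly supported functions, with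
gradients converging in `L²` (and, via the Sobolev embedding of the completion,
the functions converging in `L^{2N/(N-2)}`). -/
def MemD12 (N : ℕ) (v : Euc N → ℝ) : Prop :=
  ∃ φ : ℕ → Euc N → ℝ,
    (∀ n, ContDiff ℝ (⊤ : ℕ∞) (φ n) ∧ HasCompactSupport (φ n)) ∧
    Tendsto (fun n => eLpNorm (fun x => v x - φ n x)
      (ENNReal.ofReal (2 * (N : ℝ) / ((N : ℝ) - 2))) volume) atTop (nhds 0) ∧
    Tendsto (fun n => eLpNorm (fun x => fderiv ℝ v x - fderiv ℝ (φ n) x) 2 volume)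
      atTop (nhds 0)

/-- The best constant `S_{N,σ}` in the cylindrical Hardy–Sobolev inequality. -/
def Sconst (N k : ℕ) (σ : ℝ) : ℝ :=
  sInf {s : ℝ | ∃ v, MemD12 N v ∧ hsInt N k σ v = 1 ∧ s = gradL2 N v}

/-- A (positive) ground state for `S_{N,σ}`. -/
def GroundState (N k : ℕ) (σ : ℝ) (w : Euc N → ℝ) : Prop :=
  MemD12 N w ∧ (∀ x, 0 < w x) ∧ hsInt N k σ w = 1 ∧ gradL2 N w = Sconst N k σ

/-- Membership in `H¹₀(Ω)`: limit of smooth functions compactly supported in `Ω`,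
in the `H¹` norm. -/
def MemH10 (N : ℕ) (Ω : Set (Euc N)) (u : Euc N → ℝ) : Prop :=
  ∃ φ : ℕ → Euc N → ℝ,
    (∀ n, ContDiff ℝ (⊤ : ℕ∞) (φ n) ∧ HasCompactSupport (φ n) ∧ tsupport (φ n) ⊆ Ω) ∧
    Tendsto (fun n => eLpNorm (fun x => u x - φ n x) 2 volume) atTop (nhds 0) ∧
    Tendsto (fun n => eLpNorm (fun x => fderiv ℝ u x - fderiv ℝ (φ n) x) 2 volume)
      atTop (nhds 0)

/-- Coercivity of the operator `-Δ + h` on `H¹₀(Ω)`. -/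
def CoerciveOp (N : ℕ) (Ω : Set (Euc N)) (h : Euc N → ℝ) : Prop :=
  ∃ c > 0, ∀ u, MemH10 N Ω u →
    c * ∫ x in Ω, (‖fderiv ℝ u x‖ ^ 2 + u x ^ 2) ≤
      ∫ x in Ω, (‖fderiv ℝ u x‖ ^ 2 + h x * u x ^ 2)

/-- The Hardy–Sobolev quotient of `u` on `Ω` with singularity `Γ` and potential `h`. -/
def hsQuot (N : ℕ) (σ : ℝ) (Ω Γ : Set (Euc N)) (h : Euc N → ℝ) (u : Euc N → ℝ) : ℝ :=
  ((∫ x in Ω, ‖fderiv ℝ u x‖ ^ 2) + ∫ x in Ω, h x * u x ^ 2) /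
    (∫ x in Ω, infDist x Γ ^ (-σ) * |u x| ^ twoStar N σ) ^ (2 / twoStar N σ)

/-- The best constant `μ_{h,σ}(Ω,Γ)`. -/
def muHS (N : ℕ) (σ : ℝ) (Ω Γ : Set (Euc N)) (h : Euc N → ℝ) : ℝ :=
  sInf {m : ℝ | ∃ u, MemH10 N Ω u ∧ ¬ (u =ᵐ[volume.restrict Ω] (0 : Euc N → ℝ)) ∧
    m = hsQuot N σ Ω Γ h u}

/-- The pointwise Laplacian of `f : ℝ^N → ℝ`. -/
def lapl (N : ℕ) (f : Euc N → ℝ) (x : Euc N) : ℝ :=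
  ∑ i : Fin N, fderiv ℝ (fun y => fderiv ℝ f y (EuclideanSpace.single i 1)) x
    (EuclideanSpace.single i 1)

lemma gradient_apply_coord {N : ℕ} (f : Euc N → ℝ) (x : Euc N) (i : Fin N) :
    gradient f x i = fderiv ℝ f x (EuclideanSpace.single i 1) := by
  rw [← inner_gradient_left, EuclideanSpace.inner_single_right]; simp

lemma norm_gradient_eq {N : ℕ} (f : Euc N → ℝ) (x : Euc N) :
    ‖gradient f x‖ = ‖fderiv ℝ f x‖ := by
  simp [gradient]

/-- derivative of `x_i / (a + b |x|²)` along `e_i` -/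
lemma fderiv_coord_weight {N : ℕ} (a b : ℝ) (ha : 0 < a) (hb : 0 < b) (i : Fin N) (x : Euc N) :
    HasFDerivAt (fun x : Euc N => x i * (a + b * ‖x‖ ^ 2)⁻¹)
      (x i • ((-(((a + b * ‖x‖ ^ 2) ^ 2)⁻¹)) • (b • (2 • innerSL ℝ x)))
        + (a + b * ‖x‖ ^ 2)⁻¹ • (EuclideanSpace.proj i : Euc N →L[ℝ] ℝ)) x := by
  have h1 : HasFDerivAt (fun x : Euc N => x i) (EuclideanSpace.proj i : Euc N →L[ℝ] ℝ) x :=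
    (EuclideanSpace.proj i : Euc N →L[ℝ] ℝ).hasFDerivAt
  have h2 : HasFDerivAt (fun x : Euc N => a + b * ‖x‖ ^ 2) (b • (2 • innerSL ℝ x)) x :=
    ((hasStrictFDerivAt_norm_sq x).hasFDerivAt.const_mul b).const_add a
  have hpos : a + b * ‖x‖ ^ 2 ≠ 0 := by positivity
  have h3 := (hasDerivAt_inv hpos).comp_hasFDerivAt x h2
  exact h1.mul h3

lemma fderiv_coord_weight_apply {N : ℕ} (a b : ℝ) (ha : 0 < a) (hb : 0 < b) (i : Fin N)
    (x : Euc N) :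
    fderiv ℝ (fun x : Euc N => x i * (a + b * ‖x‖ ^ 2)⁻¹) x (EuclideanSpace.single i 1)
      = (a + b * ‖x‖ ^ 2)⁻¹ - 2 * b * x i ^ 2 * ((a + b * ‖x‖ ^ 2)⁻¹) ^ 2 := by
  rw [(fderiv_coord_weight a b ha hb i x).fderiv]
  simp [EuclideanSpace.inner_single_right]
  ring

/-- Integration by parts in coordinate `i`. -/
lemma ibp_coord {N : ℕ} (a b : ℝ) (ha : 0 < a) (hb : 0 < b) (i : Fin N) (φ : Euc N → ℝ)
    (h1 : ContDiff ℝ (⊤ : ℕ∞) φ) (h2 : HasCompactSupport φ) :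
    ∫ x, φ x ^ 2 * ((a + b * ‖x‖ ^ 2)⁻¹ - 2 * b * x i ^ 2 * ((a + b * ‖x‖ ^ 2)⁻¹) ^ 2)
      = - ∫ x, 2 * φ x * (gradient φ x i * (x i * (a + b * ‖x‖ ^ 2)⁻¹)) := by
  have hd : Differentiable ℝ φ := h1.differentiable (by simp)
  have hcθ : Continuous (fun x : Euc N => (a + b * ‖x‖ ^ 2)⁻¹) :=
    Continuous.inv₀ (by fun_prop) (fun x => by positivity)
  have hcφ := h1.continuous
  have hcg : Continuous (fun x => fderiv ℝ φ x (EuclideanSpace.single i 1)) :=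
    (h1.continuous_fderiv (by simp)).clm_apply continuous_const
  have hci : Continuous (fun x : Euc N => x i) :=
    (EuclideanSpace.proj i : Euc N →L[ℝ] ℝ).continuous
  have hsq : ∀ x, fderiv ℝ (fun x => φ x ^ 2) x (EuclideanSpace.single i 1)
      = 2 * φ x * fderiv ℝ φ x (EuclideanSpace.single i 1) := by
    intro x
    rw [((hd x).hasFDerivAt.pow 2).fderiv]; simp
  have key := integral_mul_fderiv_eq_neg_fderiv_mul_of_integrable (μ := volume)
    (f := fun x : Euc N => x i * (a + b * ‖x‖ ^ 2)⁻¹) (g := fun x => φ x ^ 2)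
    (v := EuclideanSpace.single i 1) ?_ ?_ ?_ ?_ ?_
  · simp_rw [fderiv_coord_weight_apply a b ha hb, hsq] at key
    simp_rw [gradient_apply_coord]
    rw [eq_neg_iff_add_eq_zero] at key ⊢
    rw [← key, add_comm]
    congr 1 <;> (congr 1; ext x; ring)
  · simp_rw [fderiv_coord_weight_apply a b ha hb]
    refine Continuous.integrable_of_hasCompactSupport (by fun_prop) ?_
    refine h2.mono' ?_
    intro x hx
    apply subset_tsupport
    intro h0
    apply hx
    simp [h0]
  · simp_rw [hsq]
    refine Continuous.integrable_of_hasCompactSupport (by fun_prop) ?_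
    refine h2.mono' ?_
    intro x hx
    apply subset_tsupport
    intro h0
    apply hx
    simp [h0]
  · refine Continuous.integrable_of_hasCompactSupport (by fun_prop) ?_
    refine h2.mono' ?_
    intro x hx
    apply subset_tsupport
    intro h0
    apply hx
    simp [h0]
  · intro x _
    exact (fderiv_coord_weight a b ha hb i x).differentiableAt
  · intro x _
    exact (hd x).pow 2

/-- A regularised Hardy inequality. -/
lemma hardy_smooth {N : ℕ} (hN : 3 ≤ N) (φ : Euc N → ℝ)
    (h1 : ContDiff ℝ (⊤ : ℕ∞) φ) (h2 : HasCompactSupport φ) :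
    (((N : ℝ) - 2) / 2) ^ 2 * ∫ x, φ x ^ 2 * (1 + ‖x‖ ^ 2)⁻¹ ≤ ∫ x, ‖gradient φ x‖ ^ 2 := by
  have hNr : (3 : ℝ) ≤ N := by exact_mod_cast hN
  have hcθ : Continuous (fun x : Euc N => (1 + ‖x‖ ^ 2)⁻¹) :=
    Continuous.inv₀ (by fun_prop) (fun x => by positivity)
  have hcφ := h1.continuous
  have hcg : Continuous (gradient φ) :=
    (InnerProductSpace.toDual ℝ (Euc N)).symm.continuous.comp (h1.continuous_fderiv (by simp))
  have hci : ∀ i, Continuous (fun x : Euc N => x i) := fun i =>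
    (EuclideanSpace.proj i : Euc N →L[ℝ] ℝ).continuous
  have hcgi : ∀ i, Continuous (fun x => gradient φ x i) := fun i => (hci i).comp hcg
  have hInt : ∀ F : Euc N → ℝ, Continuous F → (∀ x, φ x = 0 → F x = 0) → Integrable F := by
    intro F hF h0
    refine hF.integrable_of_hasCompactSupport (h2.mono' ?_)
    intro x hx
    apply subset_tsupport
    intro h
    exact hx (h0 x h)
  have hgs : HasCompactSupport (fun x => ‖gradient φ x‖ ^ 2) := by
    refine (h2.fderiv ℝ).mono' ?_
    intro x hx
    apply subset_tsupport
    intro h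
    apply hx
    simp [gradient, h]
  have hIg : Integrable (fun x => ‖gradient φ x‖ ^ 2) :=
    Continuous.integrable_of_hasCompactSupport (by fun_prop) hgs
  have hIA : Integrable (fun x => φ x ^ 2 * (1 + ‖x‖ ^ 2)⁻¹) :=
    hInt _ (by fun_prop) (fun x h => by simp [h])
  have hsum : ∫ x, φ x ^ 2 * (N * (1 + ‖x‖ ^ 2)⁻¹ - 2 * ‖x‖ ^ 2 * ((1 + ‖x‖ ^ 2)⁻¹) ^ 2)
      = - ∫ x, 2 * φ x * (inner ℝ (gradient φ x) x * (1 + ‖x‖ ^ 2)⁻¹) := by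
    have e1 : ∀ x : Euc N, φ x ^ 2 * (N * (1 + ‖x‖ ^ 2)⁻¹ - 2 * ‖x‖ ^ 2 * ((1 + ‖x‖ ^ 2)⁻¹) ^ 2)
      = ∑ i : Fin N, φ x ^ 2 * ((1 + 1 * ‖x‖ ^ 2)⁻¹ -
          2 * 1 * x i ^ 2 * ((1 + 1 * ‖x‖ ^ 2)⁻¹) ^ 2) := by
      intro x
      rw [← Finset.mul_sum, Finset.sum_sub_distrib, ← Finset.sum_mul, ← Finset.mul_sum,
        ← EuclideanSpace.real_norm_sq_eq]
      simp
    have e2 : ∀ x : Euc N, 2 * φ x * (inner ℝ (gradient φ x) x * (1 + ‖x‖ ^ 2)⁻¹)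
      = ∑ i : Fin N, 2 * φ x * (gradient φ x i * (x i * (1 + 1 * ‖x‖ ^ 2)⁻¹)) := by
      intro x
      rw [← Finset.mul_sum, PiLp.inner_apply, Finset.sum_mul]
      congr 1
      apply Finset.sum_congr rfl
      intro i _
      simp
      ring
    simp_rw [e1, e2]
    rw [integral_finsetSum, integral_finsetSum, ← Finset.sum_neg_distrib]
    · exact Finset.sum_congr rfl fun i _ => ibp_coord 1 1 one_pos one_pos i φ h1 h2
    · intro i _
      have := hcgi i
      have := hci i
      simp only [one_mul]
      exact hInt _ (by fun_prop) (fun x h => by simp [h])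
    · intro i _
      have := hci i
      simp only [one_mul]
      exact hInt _ (by fun_prop) (fun x h => by simp [h])
  set c : ℝ := ((N : ℝ) - 2) / 2 with hc
  have hc0 : 0 < c := by rw [hc]; linarith
  have hl : 2 * c * ∫ x, φ x ^ 2 * (1 + ‖x‖ ^ 2)⁻¹ ≤
      ∫ x, φ x ^ 2 * (N * (1 + ‖x‖ ^ 2)⁻¹ - 2 * ‖x‖ ^ 2 * ((1 + ‖x‖ ^ 2)⁻¹) ^ 2) := by
    rw [← integral_const_mul]
    refine integral_mono (hIA.const_mul _) (hInt _ (by fun_prop) (fun x h => by simp [h])) ?_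
    intro x
    simp only
    have hp : (0 : ℝ) < 1 + ‖x‖ ^ 2 := by positivity
    have : 2 * ‖x‖ ^ 2 * ((1 + ‖x‖ ^ 2)⁻¹) ^ 2 ≤ 2 * (1 + ‖x‖ ^ 2)⁻¹ := by
      have h3 : ‖x‖ ^ 2 * (1 + ‖x‖ ^ 2)⁻¹ ≤ 1 := by
        rw [← div_eq_mul_inv, div_le_one hp]; linarith
      have h4 : 0 < (1 + ‖x‖ ^ 2)⁻¹ := by positivity
      nlinarith
    have h5 : 0 ≤ φ x ^ 2 := sq_nonneg _
    have h6 : 2 * c = N - 2 := by rw [hc]; ring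
    rw [h6]
    nlinarith
  have hr : - ∫ x, 2 * φ x * (inner ℝ (gradient φ x) x * (1 + ‖x‖ ^ 2)⁻¹) ≤
      c * (∫ x, φ x ^ 2 * (1 + ‖x‖ ^ 2)⁻¹) + c⁻¹ * ∫ x, ‖gradient φ x‖ ^ 2 := by
    rw [← integral_const_mul, ← integral_const_mul, ← integral_neg,
      ← integral_add (hIA.const_mul _) (hIg.const_mul _)]
    refine integral_mono (hInt _ (by fun_prop) (fun x h => by simp [h])).neg
      ((hIA.const_mul _).add (hIg.const_mul _)) ?_
    intro x
    simp only
    have hp : (0 : ℝ) < 1 + ‖x‖ ^ 2 := by positivity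
    have h3 : ‖x‖ ^ 2 * (1 + ‖x‖ ^ 2)⁻¹ ≤ 1 := by
      rw [← div_eq_mul_inv, div_le_one hp]; linarith
    have h4 : 0 < (1 + ‖x‖ ^ 2)⁻¹ := by positivity
    set q := (1 + ‖x‖ ^ 2)⁻¹
    have h5 : |inner ℝ (gradient φ x) x| ≤ ‖gradient φ x‖ * ‖x‖ := abs_real_inner_le_norm _ _
    have h6 : -(2 * φ x * (inner ℝ (gradient φ x) x * q)) ≤ 2 * |φ x| * (‖gradient φ x‖ * ‖x‖) * q := by
      calc _ ≤ |(2 * φ x * (inner ℝ (gradient φ x) x * q))| := neg_le_abs _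
        _ = 2 * |φ x| * |inner ℝ (gradient φ x) x| * q := by
          rw [abs_mul, abs_mul, abs_mul, abs_of_pos h4]; simp; ring
        _ ≤ _ := by gcongr
    have h7 : 2 * |φ x| * (‖gradient φ x‖ * ‖x‖) * q ≤
        c * (φ x ^ 2 * q) + c⁻¹ * (‖gradient φ x‖ ^ 2 * (‖x‖ ^ 2 * q)) := by
      have h8 : 0 ≤ c⁻¹ * q * (c * |φ x| - ‖gradient φ x‖ * ‖x‖) ^ 2 := by positivity
      have h9 : c⁻¹ * q * (c * |φ x| - ‖gradient φ x‖ * ‖x‖) ^ 2 =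
        c * (|φ x| ^ 2 * q) + c⁻¹ * (‖gradient φ x‖ ^ 2 * (‖x‖ ^ 2 * q)) -
          2 * |φ x| * (‖gradient φ x‖ * ‖x‖) * q := by
        field_simp; ring
      rw [sq_abs] at h9
      linarith
    have h10 : c⁻¹ * (‖gradient φ x‖ ^ 2 * (‖x‖ ^ 2 * q)) ≤ c⁻¹ * ‖gradient φ x‖ ^ 2 := by
      gcongr
      nlinarith [sq_nonneg ‖gradient φ x‖]
    linarith
  have hfin : c * (∫ x, φ x ^ 2 * (1 + ‖x‖ ^ 2)⁻¹) ≤ c⁻¹ * ∫ x, ‖gradient φ x‖ ^ 2 := by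
    linarith
  calc c ^ 2 * ∫ x, φ x ^ 2 * (1 + ‖x‖ ^ 2)⁻¹ = c * (c * ∫ x, φ x ^ 2 * (1 + ‖x‖ ^ 2)⁻¹) := by ring
    _ ≤ c * (c⁻¹ * ∫ x, ‖gradient φ x‖ ^ 2) := by gcongr
    _ = _ := by field_simp

lemma measurable_zNorm (N k : ℕ) : Measurable (zNorm N k) := by
  unfold zNorm
  refine Measurable.sqrt (Finset.measurable_sum _ fun i _ => ?_)
  split_ifs
  · exact (Continuous.measurable (by fun_prop))
  · exact measurable_const

lemma zNorm_nonneg (N k : ℕ) (x : Euc N) : 0 ≤ zNorm N k x := Real.sqrt_nonneg _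

lemma coord_ne_zero_ae {N : ℕ} (i : Fin N) : ∀ᵐ x : Euc N, x i ≠ 0 := by
  have h : volume ((LinearMap.ker (EuclideanSpace.proj i : Euc N →L[ℝ] ℝ).toLinearMap :
      Submodule ℝ (Euc N)) : Set (Euc N)) = 0 := by
    apply Measure.addHaar_submodule
    intro h
    have : EuclideanSpace.single i (1 : ℝ) ∈
        LinearMap.ker (EuclideanSpace.proj i : Euc N →L[ℝ] ℝ).toLinearMap := by rw [h]; trivial
    simp at this
  rw [ae_iff]
  convert h using 2
  ext x
  simp

lemma zNorm_ge {N k : ℕ} (i j : Fin N) (hij : i ≠ j) (hi : k ≤ i) (hj : k ≤ j) (x : Euc N) :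
    (x i) ^ 2 + (x j) ^ 2 ≤ zNorm N k x ^ 2 := by
  unfold zNorm
  rw [Real.sq_sqrt (Finset.sum_nonneg fun i _ => by split_ifs <;> positivity)]
  calc (x i) ^ 2 + (x j) ^ 2
      = ∑ l ∈ ({i, j} : Finset (Fin N)), (if k ≤ (l : ℕ) then (x l) ^ 2 else 0) := by
        rw [Finset.sum_pair hij, if_pos hi, if_pos hj]
    _ ≤ _ := Finset.sum_le_sum_of_subset_of_nonneg (Finset.subset_univ _)
        (fun l _ _ => by split_ifs <;> positivity)

lemma integrableOn_abs_rpow (c R : ℝ) (hc : c < 1) (hR : 0 < R) :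
    IntegrableOn (fun r : ℝ => |r| ^ (-c)) (Icc (-R) R) := by
  have h1 : IntervalIntegrable (fun r : ℝ => |r| ^ (-c)) volume 0 R := by
    refine (intervalIntegral.intervalIntegrable_rpow' (r := -c) (by linarith)).congr ?_
    intro r hr
    rw [uIoc_of_le hR.le] at hr
    simp [abs_of_pos hr.1]
  have h2 : IntervalIntegrable (fun r : ℝ => |r| ^ (-c)) volume (-R) 0 := by
    have := h1.comp_sub_left 0
    simp at this
    exact this.symm
  have h3 := h2.trans h1
  rwa [intervalIntegrable_iff_integrableOn_Icc_of_le (by linarith)] at h3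

lemma integrable_hs {N k : ℕ} {σ p : ℝ} (hN : 5 ≤ N) (hk2 : k ≤ N - 2)
    (hσ : σ ∈ Set.Ioo (0 : ℝ) 2) (hp : 0 < p) (φ : Euc N → ℝ)
    (h1 : Continuous φ) (h2 : HasCompactSupport φ) :
    Integrable (fun x => zNorm N k x ^ (-σ) * |φ x| ^ p) := by
  obtain ⟨M, hM⟩ := h1.bounded_above_of_compact_support h2
  obtain ⟨R, hR0, hR⟩ := h2.isCompact.isBounded.exists_pos_norm_le
  let a : Fin N := ⟨N - 1, by omega⟩
  let b : Fin N := ⟨N - 2, by omega⟩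
  have hab : a ≠ b := by simp [a, b, Fin.ext_iff]; omega
  have hab' : b ≠ a := hab.symm
  let h : Fin N → ℝ → ℝ := fun i => (Icc (-R) R).indicator fun r =>
    (if i = a then |r| ^ (-(σ / 2)) else 1) * (if i = b then |r| ^ (-(σ / 2)) else 1)
  have hh : ∀ i, Integrable (h i) := by
    intro i
    simp only [h]
    rw [integrable_indicator_iff measurableSet_Icc]
    have := integrableOn_abs_rpow (σ / 2) R (by linarith [hσ.2]) hR0
    by_cases hi : i = a
    · subst hi; simpa [hab] using this
    · by_cases hi' : i = b
      · subst hi'; simpa [hab'] using this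
      · simp [hi, hi']
  have hprod : Integrable (fun x : Euc N => ∏ i, h i (x i)) := by
    have := Integrable.fintype_prod (μ := fun _ => (volume : Measure ℝ)) hh
    exact (PiLp.volume_preserving_ofLp (Fin N)).integrable_comp_of_integrable this
  refine (hprod.const_mul (M ^ p)).mono' ?_ ?_
  · exact (((measurable_zNorm N k).pow_const _).mul
      ((h1.measurable.abs).pow_const _)).aestronglyMeasurable
  · filter_upwards [coord_ne_zero_ae a, coord_ne_zero_ae b] with x hxa hxb
    have hz0 := zNorm_nonneg N k x
    rw [Real.norm_of_nonneg (by positivity)]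
    have hnn : ∀ i, 0 ≤ h i (x i) := by
      intro i
      refine indicator_nonneg ?_ _
      intro r _
      split_ifs <;> positivity
    have hM0 : 0 ≤ M := (norm_nonneg _).trans (hM x)
    by_cases hx : φ x = 0
    · rw [hx, abs_zero, Real.zero_rpow hp.ne', mul_zero]
      exact mul_nonneg (by positivity) (Finset.prod_nonneg fun i _ => hnn i)
    · have hxR : ‖x‖ ≤ R := hR x (subset_tsupport _ hx)
      have hmem : ∀ i, x i ∈ Icc (-R) R := by
        intro i
        have : ‖x i‖ ≤ ‖x‖ := PiLp.norm_apply_le x i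
        rw [Real.norm_eq_abs] at this
        exact abs_le.1 (this.trans hxR)
      have hpr : ∏ i, h i (x i) = |x a| ^ (-(σ / 2)) * |x b| ^ (-(σ / 2)) := by
        have : ∀ i, h i (x i) = (if i = a then |x i| ^ (-(σ / 2)) else 1) *
            (if i = b then |x i| ^ (-(σ / 2)) else 1) := fun i => indicator_of_mem (hmem i) _
        simp_rw [this]
        rw [Finset.prod_mul_distrib]
        simp
      rw [hpr, mul_comm (M ^ p)]
      have h3 : |φ x| ^ p ≤ M ^ p := by
        exact Real.rpow_le_rpow (abs_nonneg _) (hM x) hp.le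
      have h4 : zNorm N k x ^ (-σ) ≤ |x a| ^ (-(σ / 2)) * |x b| ^ (-(σ / 2)) := by
        have hg := zNorm_ge a b hab (k := k) (by simp only [a]; omega) (by simp only [b]; omega) x
        have hapos : 0 < |x a| := abs_pos.2 hxa
        have hbpos : 0 < |x b| := abs_pos.2 hxb
        have h5 : |x a| * |x b| ≤ zNorm N k x ^ 2 := by
          rw [← sq_abs (x a), ← sq_abs (x b)] at hg
          nlinarith [sq_nonneg (|x a| - |x b|), sq_nonneg (|x a|), sq_nonneg (|x b|)]
        rw [← Real.mul_rpow hapos.le hbpos.le]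
        calc zNorm N k x ^ (-σ) = (zNorm N k x ^ 2) ^ (-(σ / 2)) := by
              rw [← Real.rpow_natCast, ← Real.rpow_mul hz0]; congr 1; push_cast; ring
          _ ≤ _ := Real.rpow_le_rpow_of_nonpos (by positivity) h5 (by linarith [hσ.1])
      gcongr

lemma memD12_smooth {N : ℕ} (φ : Euc N → ℝ)
    (h1 : ContDiff ℝ (⊤ : ℕ∞) φ) (h2 : HasCompactSupport φ) : MemD12 N φ := by
  refine ⟨fun _ => φ, fun _ => ⟨h1, h2⟩, by simp, ?_⟩
  have : eLpNorm (fun x : Euc N => fderiv ℝ φ x - fderiv ℝ φ x) 2 volume = 0 := by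
    rw [eLpNorm_congr_norm_ae (g := fun _ => (0 : ℝ)) (by filter_upwards with x; simp)]
    simp
  simp only [this]
  exact tendsto_const_nhds

lemma twoStar_gt {N : ℕ} {σ : ℝ} (hN : 5 ≤ N) (hσ : σ ∈ Set.Ioo (0 : ℝ) 2) :
    2 < twoStar N σ := by
  have hNr : (5 : ℝ) ≤ N := by exact_mod_cast hN
  unfold twoStar
  rw [lt_div_iff₀ (by linarith)]
  linarith [hσ.2]

lemma Sconst_le {N k : ℕ} {σ : ℝ} (v : Euc N → ℝ) (h : MemD12 N v) (h1 : hsInt N k σ v = 1) :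
    Sconst N k σ ≤ gradL2 N v := by
  refine csInf_le ⟨0, ?_⟩ ⟨v, h, h1, rfl⟩
  rintro s ⟨v, -, -, rfl⟩
  exact integral_nonneg fun x => by positivity

lemma hs_smooth {N k : ℕ} {σ : ℝ} (hN : 5 ≤ N)
    (hσ : σ ∈ Set.Ioo (0 : ℝ) 2) (φ : Euc N → ℝ)
    (h1 : ContDiff ℝ (⊤ : ℕ∞) φ) (h2 : HasCompactSupport φ) :
    Sconst N k σ * (hsInt N k σ φ) ^ (2 / twoStar N σ) ≤ ∫ x, ‖gradient φ x‖ ^ 2 := by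
  have hp := twoStar_gt hN hσ
  set p := twoStar N σ with hpd
  simp_rw [norm_gradient_eq]
  have hnn : 0 ≤ hsInt N k σ φ := integral_nonneg fun x => by
    have := zNorm_nonneg N k x
    positivity
  rcases hnn.eq_or_lt with h0 | h0
  · rw [← h0, Real.zero_rpow (by positivity), mul_zero]
    exact integral_nonneg fun x => by positivity
  set h := hsInt N k σ φ with hh
  set c : ℝ := h ^ (-(1 / p)) with hcd
  have hc : 0 < c := by positivity
  have hm : MemD12 N (fun x => c * φ x) := by
    refine memD12_smooth _ (contDiff_const.mul h1) ?_
    exact h2.mul_left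
  have e1 : hsInt N k σ (fun x => c * φ x) = 1 := by
    unfold hsInt
    have : ∀ x, zNorm N k x ^ (-σ) * |c * φ x| ^ twoStar N σ =
      c ^ p * (zNorm N k x ^ (-σ) * |φ x| ^ twoStar N σ) := by
      intro x
      rw [abs_mul, abs_of_pos hc, Real.mul_rpow hc.le (abs_nonneg _)]; ring
    simp_rw [this]
    rw [integral_const_mul]
    change c ^ p * h = 1
    rw [hcd, ← Real.rpow_mul h0.le]
    have : -(1 / p) * p = -1 := by field_simp
    rw [this, Real.rpow_neg_one, inv_mul_cancel₀ h0.ne']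
  have e2 := Sconst_le _ hm e1
  have e3 : gradL2 N (fun x => c * φ x) = c ^ 2 * ∫ x, ‖fderiv ℝ φ x‖ ^ 2 := by
    unfold gradL2
    rw [← integral_const_mul]
    congr 1
    ext x
    rw [fderiv_const_mul ((h1.differentiable (by simp)) x), norm_smul, mul_pow,
      Real.norm_of_nonneg hc.le]
  rw [e3] at e2
  have e4 : c ^ 2 * h ^ (2 / p) = 1 := by
    rw [hcd, ← Real.rpow_natCast, ← Real.rpow_mul h0.le, ← Real.rpow_add h0]
    have : -(1 / p) * ((2 : ℕ) : ℝ) + 2 / p = 0 := by push_cast; ring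
    rw [this, Real.rpow_zero]
  calc _ ≤ (c ^ 2 * ∫ x, ‖fderiv ℝ φ x‖ ^ 2) * h ^ (2 / p) := by gcongr
    _ = (c ^ 2 * h ^ (2 / p)) * ∫ x, ‖fderiv ℝ φ x‖ ^ 2 := by ring
    _ = _ := by rw [e4, one_mul]

/-- the weight `(1+|x|²)^{-1/2}` -/
def qw (N : ℕ) (x : Euc N) : ℝ := (Real.sqrt (1 + ‖x‖ ^ 2))⁻¹

lemma qw_pos {N : ℕ} (x : Euc N) : 0 < qw N x := by unfold qw; positivity

lemma qw_sq {N : ℕ} (x : Euc N) : qw N x ^ 2 = (1 + ‖x‖ ^ 2)⁻¹ := by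
  unfold qw; rw [inv_pow, Real.sq_sqrt (by positivity)]

lemma qw_le_one {N : ℕ} (x : Euc N) : qw N x ≤ 1 := by
  have h1 := qw_sq x
  have h2 : (1 + ‖x‖ ^ 2)⁻¹ ≤ 1 := inv_le_one_of_one_le₀ (by nlinarith [sq_nonneg ‖x‖])
  nlinarith [qw_pos x]

lemma norm_mul_qw_le {N : ℕ} (x : Euc N) : ‖x‖ * qw N x ≤ 1 := by
  have h1 := qw_sq x
  have h2 : ‖x‖ ^ 2 * (1 + ‖x‖ ^ 2)⁻¹ ≤ 1 := by
    rw [← div_eq_mul_inv, div_le_one (by positivity)]; linarith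
  rw [← h1, ← mul_pow] at h2
  have : 0 ≤ ‖x‖ * qw N x := mul_nonneg (norm_nonneg _) (qw_pos x).le
  nlinarith

lemma continuous_qw {N : ℕ} : Continuous (qw N) := by
  unfold qw
  refine Continuous.inv₀ (by fun_prop) (fun x => by positivity)

lemma eLpNorm_two_eq {α F : Type*} [MeasurableSpace α] {μ : Measure α} [NormedAddCommGroup F]
    {f : α → F} (hf : MemLp f 2 μ) :
    eLpNorm f 2 μ = ENNReal.ofReal (Real.sqrt (∫ x, ‖f x‖ ^ 2 ∂μ)) := by
  rw [hf.eLpNorm_eq_integral_rpow_norm (by simp) (by simp), Real.sqrt_eq_rpow]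
  simp

lemma tendsto_integral_inner {α F : Type*} [MeasurableSpace α] {μ : Measure α}
    [NormedAddCommGroup F] [InnerProductSpace ℝ F] {f h : ℕ → α → F} {f' h' : α → F}
    (hf : ∀ n, MemLp (f n) 2 μ) (hf' : MemLp f' 2 μ)
    (hh : ∀ n, MemLp (h n) 2 μ) (hh' : MemLp h' 2 μ)
    (tf : Tendsto (fun n => eLpNorm (fun x => f n x - f' x) 2 μ) atTop (nhds 0))
    (th : Tendsto (fun n => eLpNorm (fun x => h n x - h' x) 2 μ) atTop (nhds 0)) :
    Tendsto (fun n => ∫ x, inner ℝ (f n x) (h n x) ∂μ) atTop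
      (nhds (∫ x, inner ℝ (f' x) (h' x) ∂μ)) := by
  have t1 : Tendsto (fun n => (hf n).toLp) atTop (nhds hf'.toLp) :=
    (Lp.tendsto_Lp_iff_tendsto_eLpNorm'' _ hf _ hf').2 tf
  have t2 : Tendsto (fun n => (hh n).toLp) atTop (nhds hh'.toLp) :=
    (Lp.tendsto_Lp_iff_tendsto_eLpNorm'' _ hh _ hh').2 th
  have t3 := t1.inner (𝕜 := ℝ) t2
  have e : ∀ {a b : α → F} (ha : MemLp a 2 μ) (hb : MemLp b 2 μ),
      inner ℝ (ha.toLp) (hb.toLp) = ∫ x, inner ℝ (a x) (b x) ∂μ := by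
    intro a b ha hb
    rw [L2.inner_def]
    refine integral_congr_ae ?_
    filter_upwards [ha.coeFn_toLp, hb.coeFn_toLp] with x h1 h2
    rw [h1, h2]
  simpa only [e] using t3

lemma tendsto_integral_norm_sq {α F : Type*} [MeasurableSpace α] {μ : Measure α}
    [NormedAddCommGroup F] [InnerProductSpace ℝ F] {f : ℕ → α → F} {f' : α → F}
    (hf : ∀ n, MemLp (f n) 2 μ) (hf' : MemLp f' 2 μ)
    (tf : Tendsto (fun n => eLpNorm (fun x => f n x - f' x) 2 μ) atTop (nhds 0)) :
    Tendsto (fun n => ∫ x, ‖f n x‖ ^ 2 ∂μ) atTop (nhds (∫ x, ‖f' x‖ ^ 2 ∂μ)) := by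
  simpa only [real_inner_self_eq_norm_sq] using tendsto_integral_inner hf hf' hf hf' tf tf

/-- `φ n` is a sequence of test functions approximating `w`, with gradients approximating `g`. -/
structure Approx (N : ℕ) (w : Euc N → ℝ) (g : Euc N → Euc N) (φ : ℕ → Euc N → ℝ) : Prop where
  smooth : ∀ n, ContDiff ℝ (⊤ : ℕ∞) (φ n)
  cpt : ∀ n, HasCompactSupport (φ n)
  ae : ∀ᵐ x, Tendsto (fun n => φ n x) atTop (nhds (w x))
  wm : AEStronglyMeasurable w volume
  gm : MemLp g 2 volume
  lim : Tendsto (fun n => eLpNorm (fun x => gradient (φ n) x - g x) 2 volume) atTop (nhds 0)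

lemma continuous_gradient {N : ℕ} {φ : Euc N → ℝ} (h1 : ContDiff ℝ (⊤ : ℕ∞) φ) :
    Continuous (gradient φ) :=
  (InnerProductSpace.toDual ℝ (Euc N)).symm.continuous.comp (h1.continuous_fderiv (by simp))

lemma memLp_gradient {N : ℕ} {φ : Euc N → ℝ} (h1 : ContDiff ℝ (⊤ : ℕ∞) φ)
    (h2 : HasCompactSupport φ) : MemLp (gradient φ) 2 volume := by
  refine (continuous_gradient h1).memLp_of_hasCompactSupport ?_
  refine (h2.fderiv ℝ).mono' ?_
  intro x hx
  apply subset_tsupport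
  intro h
  apply hx
  simp [gradient, h]

lemma memLp_mul_qw {N : ℕ} {φ : Euc N → ℝ} (h1 : Continuous φ)
    (h2 : HasCompactSupport φ) : MemLp (fun x => φ x * qw N x) 2 volume :=
  (h1.mul continuous_qw).memLp_of_hasCompactSupport h2.mul_right

lemma hardy_eLpNorm {N : ℕ} (hN : 5 ≤ N) (φ : Euc N → ℝ)
    (h1 : ContDiff ℝ (⊤ : ℕ∞) φ) (h2 : HasCompactSupport φ) :
    eLpNorm (fun x => φ x * qw N x) 2 volume ≤ eLpNorm (gradient φ) 2 volume := by
  rw [eLpNorm_two_eq (memLp_gradient h1 h2), eLpNorm_two_eq (memLp_mul_qw h1.continuous h2)]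
  apply ENNReal.ofReal_le_ofReal
  apply Real.sqrt_le_sqrt
  have := hardy_smooth (by omega) φ h1 h2
  have e : ∀ x, ‖φ x * qw N x‖ ^ 2 = φ x ^ 2 * (1 + ‖x‖ ^ 2)⁻¹ := by
    intro x; rw [Real.norm_eq_abs, sq_abs, mul_pow, qw_sq]
  simp_rw [e]
  have hNr : (5 : ℝ) ≤ N := by exact_mod_cast hN
  have h3 : 0 ≤ ∫ x, φ x ^ 2 * (1 + ‖x‖ ^ 2)⁻¹ := integral_nonneg fun x => by positivity
  have h4 : 1 ≤ (((N : ℝ) - 2) / 2) ^ 2 := by nlinarith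
  nlinarith

lemma gradient_sub' {N : ℕ} {f h : Euc N → ℝ} {x : Euc N} (hf : DifferentiableAt ℝ f x)
    (hh : DifferentiableAt ℝ h x) :
    gradient (fun x => f x - h x) x = gradient f x - gradient h x := by
  simp [gradient, fderiv_fun_sub hf hh]

namespace Approx
variable {N : ℕ} {w : Euc N → ℝ} {g : Euc N → Euc N} {φ : ℕ → Euc N → ℝ}

lemma hardy_diff (A : Approx N w g φ) (hN : 5 ≤ N) (n : ℕ) :
    eLpNorm (fun x => (φ n x - w x) * qw N x) 2 volume ≤
      eLpNorm (fun x => gradient (φ n) x - g x) 2 volume := by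
  have hd : ∀ n x, DifferentiableAt ℝ (φ n) x := fun n x => (A.smooth n).differentiable (by simp) x
  have h1 : ∀ m, eLpNorm (fun x => (φ n x - φ m x) * qw N x) 2 volume ≤
      eLpNorm (fun x => gradient (φ n) x - g x) 2 volume +
      eLpNorm (fun x => gradient (φ m) x - g x) 2 volume := by
    intro m
    refine (hardy_eLpNorm hN (fun x => φ n x - φ m x) ((A.smooth n).sub (A.smooth m))
      ((A.cpt n).sub (A.cpt m))).trans ?_
    have e : gradient (fun x => φ n x - φ m x) =
        (fun x => gradient (φ n) x - g x) - (fun x => gradient (φ m) x - g x) := by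
      ext1 x
      rw [gradient_sub' (hd n x) (hd m x)]
      simp
    rw [e]
    exact eLpNorm_sub_le ((memLp_gradient (A.smooth n) (A.cpt n)).sub A.gm).1
      ((memLp_gradient (A.smooth m) (A.cpt m)).sub A.gm).1 (by norm_num)
  refine (Lp.eLpNorm_lim_le_liminf_eLpNorm (f := fun m x => (φ n x - φ m x) * qw N x) ?_ _ ?_).trans ?_
  · intro m
    exact (((A.smooth n).continuous.sub (A.smooth m).continuous).mul
      continuous_qw).aestronglyMeasurable
  · filter_upwards [A.ae] with x hx
    exact (tendsto_const_nhds.sub hx).mul_const _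
  · refine (liminf_le_liminf (Eventually.of_forall h1)).trans ?_
    have := (tendsto_const_nhds (x := eLpNorm (fun x => gradient (φ n) x - g x) 2 volume)).add A.lim
    rw [this.liminf_eq, add_zero]

lemma lim_qw (A : Approx N w g φ) (hN : 5 ≤ N) :
    Tendsto (fun n => eLpNorm (fun x => φ n x * qw N x - w x * qw N x) 2 volume)
      atTop (nhds 0) := by
  simp_rw [← sub_mul]
  exact tendsto_of_tendsto_of_tendsto_of_le_of_le tendsto_const_nhds A.lim (fun _ => bot_le)
    (A.hardy_diff hN)

lemma memLp_qw (A : Approx N w g φ) (hN : 5 ≤ N) : MemLp (fun x => w x * qw N x) 2 volume := by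
  have hm : AEStronglyMeasurable (fun x => w x * qw N x) volume :=
    A.wm.mul continuous_qw.aestronglyMeasurable
  obtain ⟨n, hn⟩ := ((A.lim_qw hN).eventually_lt_const (u := 1) (by simp)).exists
  have h1 := memLp_mul_qw (A.smooth n).continuous (A.cpt n)
  have h2 : MemLp (fun x => φ n x * qw N x - w x * qw N x) 2 volume :=
    ⟨h1.1.sub hm, hn.trans (by simp)⟩
  have := h1.sub h2
  convert this using 1
  ext x
  simp

/-- Hardy for limits -/
lemma hardy (A : Approx N w g φ) (hN : 5 ≤ N) :
    (((N : ℝ) - 2) / 2) ^ 2 * ∫ x, w x ^ 2 * (1 + ‖x‖ ^ 2)⁻¹ ≤ ∫ x, ‖g x‖ ^ 2 := by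
  have e : ∀ (u : Euc N → ℝ) x, u x ^ 2 * (1 + ‖x‖ ^ 2)⁻¹ = ‖u x * qw N x‖ ^ 2 := by
    intro u x; rw [Real.norm_eq_abs, sq_abs, mul_pow, qw_sq]
  have t1 := tendsto_integral_norm_sq
    (fun n => memLp_mul_qw (A.smooth n).continuous (A.cpt n)) (A.memLp_qw hN) (A.lim_qw hN)
  have t2 := tendsto_integral_norm_sq
    (fun n => memLp_gradient (A.smooth n) (A.cpt n)) A.gm A.lim
  simp_rw [e]
  refine le_of_tendsto_of_tendsto' (t1.const_mul _) t2 fun n => ?_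
  have := hardy_smooth (by omega) (φ n) (A.smooth n) (A.cpt n)
  simp_rw [e] at this
  exact this

end Approx

lemma memLp_bdd_smul {α F : Type*} [MeasurableSpace α] {μ : Measure α}
    [NormedAddCommGroup F] [NormedSpace ℝ F] {f : α → F} {m : α → ℝ} {C : ℝ}
    (hf : MemLp f 2 μ) (hm : AEStronglyMeasurable m μ) (hC : ∀ x, |m x| ≤ C) :
    MemLp (fun x => m x • f x) 2 μ := by
  refine MemLp.of_le_mul (c := C) hf (hm.smul hf.1) (Eventually.of_forall fun x => ?_)
  rw [norm_smul]
  exact mul_le_mul_of_nonneg_right (hC x) (norm_nonneg _)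

lemma tendsto_bdd_smul {α F : Type*} [MeasurableSpace α] {μ : Measure α}
    [NormedAddCommGroup F] [NormedSpace ℝ F] {f : ℕ → α → F} {f' : α → F} {m : α → ℝ} {C : ℝ}
    (hC : ∀ x, |m x| ≤ C)
    (tf : Tendsto (fun n => eLpNorm (fun x => f n x - f' x) 2 μ) atTop (nhds 0)) :
    Tendsto (fun n => eLpNorm (fun x => m x • f n x - m x • f' x) 2 μ) atTop (nhds 0) := by
  have h1 : ∀ n, eLpNorm (fun x => m x • f n x - m x • f' x) 2 μ ≤
      ENNReal.ofReal C * eLpNorm (fun x => f n x - f' x) 2 μ := by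
    intro n
    refine eLpNorm_le_mul_eLpNorm_of_ae_le_mul (Eventually.of_forall fun x => ?_) 2
    rw [← smul_sub, norm_smul]
    exact mul_le_mul_of_nonneg_right (hC x) (norm_nonneg _)
  have h2 := ENNReal.Tendsto.const_mul (a := ENNReal.ofReal C) tf (Or.inr (by simp))
  rw [mul_zero] at h2
  exact tendsto_of_tendsto_of_tendsto_of_le_of_le tendsto_const_nhds h2 (fun _ => bot_le) h1

/-- admissible weights -/
structure Wt (N : ℕ) (η : Euc N → ℝ) (V : Euc N → Euc N) : Prop where
  smooth : ContDiff ℝ (⊤ : ℕ∞) η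
  grad : ∀ x, HasGradientAt η (V x) x
  bdd : ∃ C, ∀ x, |η x| ≤ C
  bddV : ∃ C, ∀ x, ‖V x‖ ≤ C * qw N x

lemma Wt.V_eq {N : ℕ} {η : Euc N → ℝ} {V : Euc N → Euc N} (W : Wt N η V) : V = gradient η :=
  (gradient_eq W.grad).symm

lemma Wt.contV {N : ℕ} {η : Euc N → ℝ} {V : Euc N → Euc N} (W : Wt N η V) : Continuous V := by
  rw [W.V_eq]; exact continuous_gradient W.smooth

lemma hasGradientAt_mul {N : ℕ} {f h : Euc N → ℝ} {f' h' : Euc N} {x : Euc N}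
    (hf : HasGradientAt f f' x) (hh : HasGradientAt h h' x) :
    HasGradientAt (fun x => f x * h x) (f x • h' + h x • f') x := by
  rw [hasGradientAt_iff_hasFDerivAt] at *
  have h1 := hf.mul hh
  rw [map_add, map_smulₛₗ, map_smulₛₗ]
  exact h1

namespace Approx
variable {N : ℕ} {w : Euc N → ℝ} {g : Euc N → Euc N} {φ : ℕ → Euc N → ℝ}

lemma memLp_smul_V (A : Approx N w g φ) (hN : 5 ≤ N) {η : Euc N → ℝ} {V : Euc N → Euc N}
    (W : Wt N η V) : MemLp (fun x => w x • V x) 2 volume := by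
  obtain ⟨C, hC⟩ := W.bddV
  refine MemLp.of_le_mul (c := C) (A.memLp_qw hN) (A.wm.smul W.contV.aestronglyMeasurable)
    (Eventually.of_forall fun x => ?_)
  rw [norm_smul, norm_mul, Real.norm_of_nonneg (qw_pos x).le]
  have := mul_le_mul_of_nonneg_left (hC x) (norm_nonneg (w x))
  linarith

lemma mul_weight (A : Approx N w g φ) (hN : 5 ≤ N) {η : Euc N → ℝ} {V : Euc N → Euc N}
    (W : Wt N η V) :
    Approx N (fun x => η x * w x) (fun x => η x • g x + w x • V x) (fun n x => η x * φ n x) := by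
  obtain ⟨C, hC⟩ := W.bdd
  obtain ⟨D, hD⟩ := W.bddV
  have m1 : MemLp (fun x => η x • g x) 2 volume :=
    memLp_bdd_smul A.gm W.smooth.continuous.aestronglyMeasurable hC
  refine ⟨fun n => W.smooth.mul (A.smooth n), fun n => (A.cpt n).mul_left, ?_, ?_, ?_, ?_⟩
  · filter_upwards [A.ae] with x hx
    exact hx.const_mul _
  · exact W.smooth.continuous.aestronglyMeasurable.mul A.wm
  · exact m1.add (A.memLp_smul_V hN W)
  · have t1 := tendsto_bdd_smul (m := η) hC A.lim
    have t2 : Tendsto (fun n => eLpNorm (fun x => φ n x • V x - w x • V x) 2 volume)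
        atTop (nhds 0) := by
      have h1 : ∀ n, eLpNorm (fun x => φ n x • V x - w x • V x) 2 volume ≤
          ENNReal.ofReal D * eLpNorm (fun x => φ n x * qw N x - w x * qw N x) 2 volume := by
        intro n
        refine eLpNorm_le_mul_eLpNorm_of_ae_le_mul (Eventually.of_forall fun x => ?_) 2
        rw [← sub_smul, norm_smul, ← sub_mul, norm_mul, Real.norm_of_nonneg (qw_pos x).le]
        have := mul_le_mul_of_nonneg_left (hD x) (norm_nonneg (φ n x - w x))
        linarith
      have h2 := ENNReal.Tendsto.const_mul (a := ENNReal.ofReal D) (A.lim_qw hN) (Or.inr (by simp))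
      rw [mul_zero] at h2
      exact tendsto_of_tendsto_of_tendsto_of_le_of_le tendsto_const_nhds h2 (fun _ => bot_le) h1
    have t3 := t1.add t2
    rw [add_zero] at t3
    refine tendsto_of_tendsto_of_tendsto_of_le_of_le tendsto_const_nhds t3 (fun _ => bot_le) ?_
    intro n
    have e : (fun x => gradient (fun x => η x * φ n x) x - (η x • g x + w x • V x)) =
        (fun x => η x • gradient (φ n) x - η x • g x) + (fun x => φ n x • V x - w x • V x) := by
      ext1 x
      have hd : HasGradientAt (φ n) (gradient (φ n) x) x :=
        ((A.smooth n).differentiable (by simp) x).hasGradientAt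
      rw [(hasGradientAt_mul (W.grad x) hd).gradient]
      simp only [Pi.add_apply]
      abel
    simp only
    rw [e]
    refine eLpNorm_add_le ?_ ?_ (by norm_num)
    · exact ((W.smooth.continuous.smul (continuous_gradient
        (A.smooth n))).aestronglyMeasurable).sub m1.1
    · exact (((A.smooth n).continuous.smul W.contV).aestronglyMeasurable).sub
        (A.memLp_smul_V hN W).1

lemma hs (A : Approx N w g φ) {k : ℕ} {σ : ℝ} (hN : 5 ≤ N) (hk2 : k ≤ N - 2)
    (hσ : σ ∈ Set.Ioo (0 : ℝ) 2) (hS : 0 < Sconst N k σ) :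
    Integrable (fun x => zNorm N k x ^ (-σ) * |w x| ^ twoStar N σ) ∧
    Sconst N k σ * (∫ x, zNorm N k x ^ (-σ) * |w x| ^ twoStar N σ) ^ (2 / twoStar N σ) ≤
      ∫ x, ‖g x‖ ^ 2 := by
  have hp := twoStar_gt hN hσ
  set p := twoStar N σ with hpd
  set S := Sconst N k σ
  set Q := ∫ x, ‖g x‖ ^ 2 with hQ
  have hQ0 : 0 ≤ Q := integral_nonneg fun x => by positivity
  have hnn : ∀ (u : Euc N → ℝ) x, 0 ≤ zNorm N k x ^ (-σ) * |u x| ^ p := fun u x => by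
    have := zNorm_nonneg N k x
    positivity
  have hmeas : AEStronglyMeasurable (fun x => zNorm N k x ^ (-σ) * |w x| ^ p) volume := by
    refine AEMeasurable.aestronglyMeasurable ?_
    exact ((measurable_zNorm N k).pow_const _).aemeasurable.mul
      ((A.wm.aemeasurable.abs).pow_const _)
  have t2 := tendsto_integral_norm_sq
    (fun n => memLp_gradient (A.smooth n) (A.cpt n)) A.gm A.lim
  have hb : ∀ n, ∫ x, zNorm N k x ^ (-σ) * |φ n x| ^ p ≤
      ((∫ x, ‖gradient (φ n) x‖ ^ 2) / S) ^ (p / 2) := by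
    intro n
    have h1 := hs_smooth (k := k) hN hσ (φ n) (A.smooth n) (A.cpt n)
    have h0 : 0 ≤ hsInt N k σ (φ n) := integral_nonneg (hnn (φ n))
    change hsInt N k σ (φ n) ≤ _
    calc hsInt N k σ (φ n) = (hsInt N k σ (φ n) ^ (2 / p)) ^ (p / 2) := by
          rw [← Real.rpow_mul h0]
          have : 2 / p * (p / 2) = 1 := by field_simp
          rw [this, Real.rpow_one]
      _ ≤ _ := by
          refine Real.rpow_le_rpow (by positivity) ?_ (by positivity)
          rw [le_div_iff₀ hS, mul_comm]
          exact h1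
  have t3 : Tendsto (fun n => ENNReal.ofReal (((∫ x, ‖gradient (φ n) x‖ ^ 2) / S) ^ (p / 2)))
      atTop (nhds (ENNReal.ofReal ((Q / S) ^ (p / 2)))) :=
    ENNReal.tendsto_ofReal ((t2.div_const S).rpow_const (Or.inr (by positivity)))
  have hL : ∫⁻ x, ENNReal.ofReal (zNorm N k x ^ (-σ) * |w x| ^ p) ≤
      ENNReal.ofReal ((Q / S) ^ (p / 2)) := by
    have e1 : ∫⁻ x, ENNReal.ofReal (zNorm N k x ^ (-σ) * |w x| ^ p) =
        ∫⁻ x, liminf (fun n => ENNReal.ofReal (zNorm N k x ^ (-σ) * |φ n x| ^ p)) atTop := by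
      refine lintegral_congr_ae ?_
      filter_upwards [A.ae] with x hx
      refine (Tendsto.liminf_eq ?_).symm
      refine ENNReal.tendsto_ofReal ?_
      exact (hx.abs.rpow_const (Or.inr (by positivity))).const_mul _
    rw [e1]
    refine (lintegral_liminf_le ?_).trans ?_
    · intro n
      exact (((measurable_zNorm N k).pow_const _).mul
        (((A.smooth n).continuous.measurable.abs).pow_const _)).ennreal_ofReal
    rw [← t3.liminf_eq]
    refine liminf_le_liminf (Eventually.of_forall fun n => ?_)
    rw [← ofReal_integral_eq_lintegral_ofReal
      (integrable_hs hN hk2 hσ (by positivity) (φ n) (A.smooth n).continuous (A.cpt n))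
      (Eventually.of_forall (hnn (φ n)))]
    exact ENNReal.ofReal_le_ofReal (hb n)
  have hI : Integrable (fun x => zNorm N k x ^ (-σ) * |w x| ^ p) := by
    refine ⟨hmeas, ?_⟩
    rw [hasFiniteIntegral_iff_ofReal (Eventually.of_forall (hnn w))]
    exact hL.trans_lt ENNReal.ofReal_lt_top
  refine ⟨hI, ?_⟩
  rw [← ofReal_integral_eq_lintegral_ofReal hI (Eventually.of_forall (hnn w)),
    ENNReal.ofReal_le_ofReal_iff (by positivity)] at hL
  have h0 : 0 ≤ ∫ x, zNorm N k x ^ (-σ) * |w x| ^ p := integral_nonneg (hnn w)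
  have h2 : (∫ x, zNorm N k x ^ (-σ) * |w x| ^ p) ^ (2 / p) ≤ Q / S := by
    calc _ ≤ ((Q / S) ^ (p / 2)) ^ (2 / p) := Real.rpow_le_rpow h0 hL (by positivity)
      _ = Q / S := by
          rw [← Real.rpow_mul (by positivity)]
          have : p / 2 * (2 / p) = 1 := by field_simp
          rw [this, Real.rpow_one]
  rw [le_div_iff₀ hS] at h2
  linarith

lemma ibp (A : Approx N w g φ) (hN : 5 ≤ N) (a b : ℝ) (ha : 0 < a) (hb : 0 < b) (i : Fin N) :
    ∫ x, w x ^ 2 * ((a + b * ‖x‖ ^ 2)⁻¹ - 2 * b * x i ^ 2 * ((a + b * ‖x‖ ^ 2)⁻¹) ^ 2)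
      = - ∫ x, 2 * w x * (g x i * (x i * (a + b * ‖x‖ ^ 2)⁻¹)) := by
  have hcθ : Continuous (fun x : Euc N => (a + b * ‖x‖ ^ 2)⁻¹) :=
    Continuous.inv₀ (by fun_prop) (fun x => by positivity)
  have hci : Continuous (fun x : Euc N => x i) :=
    (EuclideanSpace.proj i : Euc N →L[ℝ] ℝ).continuous
  have hcq : Continuous (fun x : Euc N => (qw N x)⁻¹) :=
    continuous_qw.inv₀ fun x => (qw_pos x).ne'
  have hqi : ∀ x : Euc N, (qw N x)⁻¹ ^ 2 = 1 + ‖x‖ ^ 2 := by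
    intro x; rw [inv_pow, qw_sq, inv_inv]
  have hi : ∀ x : Euc N, x i ^ 2 ≤ ‖x‖ ^ 2 := by
    intro x
    have : ‖x i‖ ≤ ‖x‖ := PiLp.norm_apply_le x i
    rw [← sq_abs (x i)]
    exact pow_le_pow_left₀ (abs_nonneg _) this 2
  have hθ : ∀ x : Euc N, (1 + ‖x‖ ^ 2) * (a + b * ‖x‖ ^ 2)⁻¹ ≤ a⁻¹ + b⁻¹ := by
    intro x
    rw [← div_eq_mul_inv, div_le_iff₀ (by positivity)]
    have : (a⁻¹ + b⁻¹) * (a + b * ‖x‖ ^ 2) = 1 + ‖x‖ ^ 2 + (b * a⁻¹ * ‖x‖ ^ 2 + b⁻¹ * a) := by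
      field_simp; ring
    rw [this]
    have : 0 ≤ b * a⁻¹ * ‖x‖ ^ 2 + b⁻¹ * a := by positivity
    linarith
  -- multipliers
  let m1 : Euc N → ℝ := fun x =>
    ((a + b * ‖x‖ ^ 2)⁻¹ - 2 * b * x i ^ 2 * ((a + b * ‖x‖ ^ 2)⁻¹) ^ 2) * (qw N x)⁻¹ ^ 2
  let m2 : Euc N → ℝ := fun x => x i * (a + b * ‖x‖ ^ 2)⁻¹ * (qw N x)⁻¹
  have hm1 : ∀ x, |m1 x| ≤ 3 * (a⁻¹ + b⁻¹) := by
    intro x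
    have h1 := hθ x
    have h2 : b * x i ^ 2 * (a + b * ‖x‖ ^ 2)⁻¹ ≤ 1 := by
      rw [← div_eq_mul_inv, div_le_one (by positivity)]
      have := mul_le_mul_of_nonneg_left (hi x) hb.le
      linarith
    have h3 : 0 ≤ b * x i ^ 2 * (a + b * ‖x‖ ^ 2)⁻¹ := by positivity
    have h4 : 0 ≤ (1 + ‖x‖ ^ 2) * (a + b * ‖x‖ ^ 2)⁻¹ := by positivity
    have e : m1 x = ((1 + ‖x‖ ^ 2) * (a + b * ‖x‖ ^ 2)⁻¹) *
        (1 - 2 * (b * x i ^ 2 * (a + b * ‖x‖ ^ 2)⁻¹)) := by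
      simp only [m1, hqi]; ring
    rw [e, abs_mul, abs_of_nonneg h4]
    have h5 : |1 - 2 * (b * x i ^ 2 * (a + b * ‖x‖ ^ 2)⁻¹)| ≤ 3 := by
      rw [abs_le]; constructor <;> linarith
    calc _ ≤ (a⁻¹ + b⁻¹) * 3 := by gcongr
      _ = _ := by ring
  have hm2 : ∀ x, |m2 x| ≤ a⁻¹ + b⁻¹ := by
    intro x
    refine le_trans ?_ (hθ x)
    simp only [m2]
    have hθ0 : 0 < (a + b * ‖x‖ ^ 2)⁻¹ := by positivity
    have hq0 : 0 < (qw N x)⁻¹ := inv_pos.2 (qw_pos x)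
    rw [abs_mul, abs_mul, abs_of_pos hθ0, abs_of_pos hq0]
    have h1 : |x i| ≤ (qw N x)⁻¹ := by
      refine abs_le_of_sq_le_sq ?_ hq0.le
      rw [hqi]; linarith [hi x]
    calc _ ≤ (qw N x)⁻¹ * (a + b * ‖x‖ ^ 2)⁻¹ * (qw N x)⁻¹ := by gcongr
      _ = (qw N x)⁻¹ ^ 2 * (a + b * ‖x‖ ^ 2)⁻¹ := by ring
      _ = _ := by rw [hqi]
  have cm1 : Continuous m1 := by simp only [m1]; fun_prop
  have cm2 : Continuous m2 := by simp only [m2]; fun_prop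
  have ml : ∀ n, MemLp (fun x => φ n x * qw N x) 2 volume :=
    fun n => memLp_mul_qw (A.smooth n).continuous (A.cpt n)
  have t1 := tendsto_integral_inner ml (A.memLp_qw hN)
    (fun n => memLp_bdd_smul (ml n) cm1.aestronglyMeasurable hm1)
    (memLp_bdd_smul (A.memLp_qw hN) cm1.aestronglyMeasurable hm1) (A.lim_qw hN)
    (tendsto_bdd_smul hm1 (A.lim_qw hN))
  -- components of the gradient
  have lg : ∀ {G : Euc N → Euc N}, MemLp G 2 volume → MemLp (fun x => G x i) 2 volume := by
    intro G hG
    refine MemLp.of_le_mul (c := 1) hG ?_ (Eventually.of_forall fun x => ?_)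
    · exact hci.comp_aestronglyMeasurable hG.1
    · rw [one_mul]; exact PiLp.norm_apply_le _ i
  have tg : Tendsto (fun n => eLpNorm (fun x => gradient (φ n) x i - g x i) 2 volume)
      atTop (nhds 0) := by
    refine tendsto_of_tendsto_of_tendsto_of_le_of_le tendsto_const_nhds A.lim (fun _ => bot_le) ?_
    intro n
    refine eLpNorm_mono fun x => ?_
    exact PiLp.norm_apply_le (gradient (φ n) x - g x) i
  have mg : ∀ n, MemLp (fun x => gradient (φ n) x i) 2 volume :=
    fun n => lg (memLp_gradient (A.smooth n) (A.cpt n))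
  have t2 := tendsto_integral_inner ml (A.memLp_qw hN)
    (fun n => memLp_bdd_smul (mg n) cm2.aestronglyMeasurable hm2)
    (memLp_bdd_smul (lg A.gm) cm2.aestronglyMeasurable hm2) (A.lim_qw hN)
    (tendsto_bdd_smul hm2 tg)
  have e1 : ∀ (u : Euc N → ℝ) x, inner ℝ (u x * qw N x) (m1 x • (u x * qw N x)) =
      u x ^ 2 * ((a + b * ‖x‖ ^ 2)⁻¹ - 2 * b * x i ^ 2 * ((a + b * ‖x‖ ^ 2)⁻¹) ^ 2) := by
    intro u x
    have := (qw_pos x).ne'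
    simp only [m1, smul_eq_mul, RCLike.inner_apply, conj_trivial]
    field_simp
  have e2 : ∀ (u : Euc N → ℝ) (G : Euc N → Euc N) x,
      inner ℝ (u x * qw N x) (m2 x • (G x i)) =
      2⁻¹ * (2 * u x * (G x i * (x i * (a + b * ‖x‖ ^ 2)⁻¹))) := by
    intro u G x
    have := (qw_pos x).ne'
    simp only [m2, smul_eq_mul, RCLike.inner_apply, conj_trivial]
    field_simp
  simp only [e1] at t1
  have t3 := (t2.const_mul (-2))
  refine tendsto_nhds_unique t1 ?_
  convert t3 using 2 with n
  · rw [ibp_coord a b ha hb i (φ n) (A.smooth n) (A.cpt n)]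
    have : ∀ x, inner ℝ (φ n x * qw N x) (m2 x • (gradient (φ n) x i)) = _ :=
      e2 (φ n) (gradient (φ n))
    simp_rw [this]
    rw [integral_const_mul]; ring
  · simp_rw [e2 w g]
    rw [integral_const_mul]; ring

end Approx

/-- density -/
def rhoW (N k : ℕ) (σ : ℝ) (w : Euc N → ℝ) (x : Euc N) : ℝ :=
  zNorm N k x ^ (-σ) * w x ^ twoStar N σ

/-- the probability measure `|z|^{-σ} w^p dx` -/
def muW (N k : ℕ) (σ : ℝ) (w : Euc N → ℝ) : Measure (Euc N) :=
  volume.withDensity fun x => ENNReal.ofReal (rhoW N k σ w x)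

lemma memLp_integrable_inner {N : ℕ} {f g : Euc N → Euc N} (hf : MemLp f 2 volume)
    (hg : MemLp g 2 volume) : Integrable (fun x => inner ℝ (f x) (g x)) := by
  have J0 := hf.integrable_norm_pow (by simp)
  have J2 := hg.integrable_norm_pow (by simp)
  simp only [ENNReal.toReal_ofNat, Nat.cast_ofNat] at J0 J2
  refine (J0.add J2).mono' (hf.1.inner hg.1) (Eventually.of_forall fun x => ?_)
  have := abs_real_inner_le_norm (f x) (g x)
  simp only [Real.norm_eq_abs, Pi.add_apply]
  nlinarith [sq_nonneg (‖f x‖ - ‖g x‖), sq_nonneg (‖f x‖ + ‖g x‖)]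

section
variable {N k : ℕ} {σ : ℝ} {w : Euc N → ℝ}

lemma rho_eq (hw : GroundState N k σ w) :
    (fun x => zNorm N k x ^ (-σ) * |w x| ^ twoStar N σ) = rhoW N k σ w := by
  ext x; unfold rhoW; rw [abs_of_pos (hw.2.1 x)]

lemma rho_nonneg (hw : GroundState N k σ w) (x : Euc N) : 0 ≤ rhoW N k σ w x := by
  have := zNorm_nonneg N k x
  have := hw.2.1 x
  unfold rhoW; positivity

lemma rho_integrable (hw : GroundState N k σ w) : Integrable (rhoW N k σ w) := by
  have h := hw.2.2.1
  unfold hsInt at h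
  rw [rho_eq hw] at h
  by_contra hc
  rw [integral_undef hc] at h
  norm_num at h

lemma rho_integral (hw : GroundState N k σ w) : ∫ x, rhoW N k σ w x = 1 := by
  have h := hw.2.2.1
  unfold hsInt at h
  rwa [rho_eq hw] at h

lemma mu_integral (hw : GroundState N k σ w) (f : Euc N → ℝ) :
    ∫ x, f x ∂(muW N k σ w) = ∫ x, rhoW N k σ w x * f x := by
  unfold muW
  rw [integral_withDensity_eq_integral_toReal_smul₀
    (rho_integrable hw).1.aemeasurable.ennreal_ofReal (by simp)]
  simp_rw [ENNReal.toReal_ofReal (rho_nonneg hw _), smul_eq_mul]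

lemma mu_integrable (hw : GroundState N k σ w) (f : Euc N → ℝ) :
    Integrable f (muW N k σ w) ↔ Integrable (fun x => rhoW N k σ w x * f x) := by
  unfold muW
  rw [integrable_withDensity_iff_integrable_smul₀'
    (rho_integrable hw).1.aemeasurable.ennreal_ofReal (by simp)]
  simp_rw [ENNReal.toReal_ofReal (rho_nonneg hw _), smul_eq_mul]

lemma mu_prob (hw : GroundState N k σ w) : IsProbabilityMeasure (muW N k σ w) := by
  constructor
  unfold muW
  rw [withDensity_apply _ MeasurableSet.univ, Measure.restrict_univ,
    ← ofReal_integral_eq_lintegral_ofReal (rho_integrable hw)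
      (Eventually.of_forall (rho_nonneg hw)), rho_integral hw]
  simp

lemma zNorm_pos_ae (hN : 5 ≤ N) (hk2 : k ≤ N - 2) : ∀ᵐ x : Euc N, 0 < zNorm N k x := by
  let a : Fin N := ⟨N - 1, by omega⟩
  let b : Fin N := ⟨N - 2, by omega⟩
  have hab : a ≠ b := by simp [a, b, Fin.ext_iff]; omega
  filter_upwards [coord_ne_zero_ae a] with x hx
  have hg := zNorm_ge a b hab (k := k) (by simp only [a]; omega) (by simp only [b]; omega) x
  have h1 : 0 < (x a) ^ 2 := by positivity
  have h2 := sq_nonneg (x b)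
  by_contra h
  have h3 : zNorm N k x = 0 := le_antisymm (not_lt.1 h) (zNorm_nonneg N k x)
  rw [h3] at hg
  nlinarith

lemma w_meas (hN : 5 ≤ N) (hk2 : k ≤ N - 2) (hσ : σ ∈ Set.Ioo (0 : ℝ) 2)
    (hw : GroundState N k σ w) : AEStronglyMeasurable w volume := by
  have hp := twoStar_gt hN hσ
  have h1 : AEMeasurable (fun x => (rhoW N k σ w x / zNorm N k x ^ (-σ)) ^ (1 / twoStar N σ))
      volume :=
    ((rho_integrable hw).1.aemeasurable.div
      ((measurable_zNorm N k).pow_const _).aemeasurable).pow_const _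
  refine (h1.congr ?_).aestronglyMeasurable
  filter_upwards [zNorm_pos_ae hN hk2] with x hx
  have h2 : 0 < zNorm N k x ^ (-σ) := by positivity
  unfold rhoW
  rw [mul_div_cancel_left₀ _ h2.ne', ← Real.rpow_mul (hw.2.1 x).le, mul_one_div_cancel (by linarith),
    Real.rpow_one]

lemma exists_approx (hN : 5 ≤ N) (hk2 : k ≤ N - 2) (hσ : σ ∈ Set.Ioo (0 : ℝ) 2)
    (hw : GroundState N k σ w) : ∃ φ, Approx N w (gradient w) φ := by
  obtain ⟨φ, h1, h2, h3⟩ := hw.1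
  have hwm := w_meas hN hk2 hσ hw
  have hNr : (5 : ℝ) ≤ N := by exact_mod_cast hN
  have hp0 : ENNReal.ofReal (2 * (N : ℝ) / ((N : ℝ) - 2)) ≠ 0 := by
    simp only [ne_eq, ENNReal.ofReal_eq_zero, not_le]
    apply div_pos <;> linarith
  have t1 : TendstoInMeasure volume φ atTop w := by
    refine tendstoInMeasure_of_tendsto_eLpNorm hp0
      (fun n => (h1 n).1.continuous.aestronglyMeasurable) hwm ?_
    simp_rw [eLpNorm_sub_comm _ w]
    exact h2
  obtain ⟨ns, hns, hae⟩ := t1.exists_seq_tendsto_ae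
  have hgm : AEStronglyMeasurable (gradient w) volume := by
    have := (measurable_fderiv ℝ w)
    exact ((InnerProductSpace.toDual ℝ (Euc N)).symm.continuous.measurable.comp
      this).aestronglyMeasurable
  have e : ∀ n, eLpNorm (fun x => gradient (φ n) x - gradient w x) 2 volume =
      eLpNorm (fun x => fderiv ℝ w x - fderiv ℝ (φ n) x) 2 volume := by
    intro n
    refine eLpNorm_congr_norm_ae (Eventually.of_forall fun x => ?_)
    simp only [gradient]
    rw [← map_sub, LinearIsometryEquiv.norm_map, norm_sub_rev]
  have t2 : Tendsto (fun n => eLpNorm (fun x => gradient (φ n) x - gradient w x) 2 volume)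
      atTop (nhds 0) := by simp_rw [e]; exact h3
  refine ⟨fun n => φ (ns n), fun n => (h1 _).1, fun n => (h1 _).2, hae, hwm, ?_,
    t2.comp hns.tendsto_atTop⟩
  obtain ⟨n, hn⟩ := (t2.eventually_lt_const (u := 1) (by simp)).exists
  have m1 := memLp_gradient (h1 n).1 (h1 n).2
  have m2 : MemLp (fun x => gradient (φ n) x - gradient w x) 2 volume :=
    ⟨m1.1.sub hgm, hn.trans (by simp)⟩
  refine MemLp.ae_eq (Eventually.of_forall fun x => ?_) (m1.sub m2)
  simp

lemma S_eq (hw : GroundState N k σ w) : ∫ x, ‖gradient w x‖ ^ 2 = Sconst N k σ := by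
  rw [← hw.2.2.2]
  simp_rw [norm_gradient_eq]
  rfl

lemma S_pos (hN : 5 ≤ N) (hk2 : k ≤ N - 2) (hσ : σ ∈ Set.Ioo (0 : ℝ) 2)
    (hw : GroundState N k σ w) : 0 < Sconst N k σ := by
  obtain ⟨φ, A⟩ := exists_approx hN hk2 hσ hw
  have h1 := A.hardy hN
  rw [S_eq hw] at h1
  refine lt_of_lt_of_le ?_ h1
  have hNr : (5 : ℝ) ≤ N := by exact_mod_cast hN
  have hc : 0 < (((N : ℝ) - 2) / 2) ^ 2 := by
    have : 0 < ((N : ℝ) - 2) / 2 := by linarith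
    positivity
  refine mul_pos hc ?_
  have hpos : ∀ x, 0 < w x ^ 2 * (1 + ‖x‖ ^ 2)⁻¹ := fun x => by
    have := hw.2.1 x
    positivity
  rw [integral_pos_iff_support_of_nonneg (fun x => (hpos x).le)]
  · have : Function.support (fun x => w x ^ 2 * (1 + ‖x‖ ^ 2)⁻¹) = univ := by
      ext x; simp only [Function.mem_support, mem_univ, iff_true]; exact (hpos x).ne'
    rw [this]
    exact Measure.measure_univ_pos.2 (NeZero.ne _)
  · have := (A.memLp_qw hN).integrable_sq
    convert this using 2 with x
    rw [mul_pow, qw_sq]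

/-- Hölder form of the Hardy-Sobolev inequality. -/
lemma tail (hN : 5 ≤ N) (hk2 : k ≤ N - 2) (hσ : σ ∈ Set.Ioo (0 : ℝ) 2)
    (hw : GroundState N k σ w) {η : Euc N → ℝ} {V : Euc N → Euc N} (W : Wt N η V)
    (E : Set (Euc N)) (hE : MeasurableSet E) :
    Sconst N k σ * ∫ x in E, η x ^ 2 ∂(muW N k σ w) ≤
      ((muW N k σ w).real E) ^ ((twoStar N σ - 2) / twoStar N σ) *
        ∫ x, ‖η x • gradient w x + w x • V x‖ ^ 2 := by
  have := mu_prob hw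
  obtain ⟨φ, A⟩ := exists_approx hN hk2 hσ hw
  have hS := S_pos hN hk2 hσ hw
  have hp := twoStar_gt hN hσ
  obtain ⟨-, h2⟩ := (A.mul_weight hN W).hs hN hk2 hσ hS
  obtain ⟨C, hC⟩ := W.bdd
  set p := twoStar N σ with hpd
  set μ := muW N k σ w
  have hconj : Real.HolderConjugate (p / (p - 2)) (p / 2) := by
    rw [Real.holderConjugate_iff]
    constructor
    · rw [lt_div_iff₀ (by linarith)]; linarith
    · have : p - 2 ≠ 0 := by linarith
      field_simp; ring
  have e1 : ∫ x, zNorm N k x ^ (-σ) * |η x * w x| ^ p = ∫ x, (η x ^ 2) ^ (p / 2) ∂μ := by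
    rw [mu_integral hw]
    congr 1
    ext x
    unfold rhoW
    rw [abs_mul, Real.mul_rpow (abs_nonneg _) (abs_nonneg _), abs_of_pos (hw.2.1 x), ← sq_abs (η x),
      ← Real.rpow_natCast |η x|, ← Real.rpow_mul (abs_nonneg _)]
    have : ((2 : ℕ) : ℝ) * (p / 2) = p := by push_cast; ring
    rw [this]; ring
  have hη : AEStronglyMeasurable (fun x => η x ^ 2) μ :=
    (W.smooth.continuous.pow 2).aestronglyMeasurable
  have h3 := integral_mul_le_Lp_mul_Lq_of_nonneg (μ := μ) hconj
    (f := E.indicator 1) (g := fun x => η x ^ 2)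
    (Eventually.of_forall fun x => indicator_nonneg (fun _ _ => zero_le_one) _)
    (Eventually.of_forall fun x => sq_nonneg _)
    (memLp_indicator_const _ hE 1 (Or.inr (measure_ne_top _ _)))
    (MemLp.of_bound hη (C ^ 2) (Eventually.of_forall fun x => by
      rw [Real.norm_of_nonneg (sq_nonneg _), ← sq_abs]
      exact pow_le_pow_left₀ (abs_nonneg _) (hC x) 2))
  have e2 : ∀ x, E.indicator (1 : Euc N → ℝ) x * η x ^ 2 = E.indicator (fun x => η x ^ 2) x := by
    intro x
    by_cases hx : x ∈ E <;> simp [hx]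
  have e3 : ∀ x, (E.indicator (1 : Euc N → ℝ) x) ^ (p / (p - 2)) =
      E.indicator (1 : Euc N → ℝ) x := by
    intro x
    have : p / (p - 2) ≠ 0 := hconj.ne_zero
    by_cases hx : x ∈ E <;> simp [hx, Real.zero_rpow this]
  simp_rw [e2, e3] at h3
  rw [integral_indicator hE, integral_indicator_one hE] at h3
  have e4 : 1 / (p / (p - 2)) = (p - 2) / p := one_div_div _ _
  have e5 : 1 / (p / 2) = 2 / p := one_div_div _ _
  rw [e4, e5, ← e1] at h3
  have h0 : 0 ≤ μ.real E ^ ((p - 2) / p) := by positivity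
  calc _ ≤ Sconst N k σ * (μ.real E ^ ((p - 2) / p) *
        (∫ x, zNorm N k x ^ (-σ) * |η x * w x| ^ p) ^ (2 / p)) := by gcongr
    _ = μ.real E ^ ((p - 2) / p) * (Sconst N k σ *
        (∫ x, zNorm N k x ^ (-σ) * |η x * w x| ^ p) ^ (2 / p)) := by ring
    _ ≤ _ := mul_le_mul_of_nonneg_left h2 h0

lemma Wt.affine {η : Euc N → ℝ} {V : Euc N → Euc N} (W : Wt N η V) (ε : ℝ) :
    Wt N (fun x => 1 + ε * η x) (fun x => ε • V x) := by
  obtain ⟨C, hC⟩ := W.bdd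
  obtain ⟨D, hD⟩ := W.bddV
  refine ⟨contDiff_const.add (contDiff_const.mul W.smooth), fun x => ?_, ⟨1 + |ε| * C, fun x => ?_⟩,
    ⟨|ε| * D, fun x => ?_⟩⟩
  · have := W.grad x
    rw [hasGradientAt_iff_hasFDerivAt] at *
    have h1 := (this.const_mul ε).const_add 1
    rw [map_smulₛₗ]
    exact h1
  · refine (abs_add_le _ _).trans ?_
    rw [abs_one, abs_mul]
    gcongr
    exact hC x
  · rw [norm_smul, Real.norm_eq_abs, mul_assoc]
    gcongr
    exact hD x

lemma quad_zero {d e : ℝ} (h : ∀ ε : ℝ, 0 ≤ 2 * ε * d + ε ^ 2 * e) : d = 0 := by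
  by_contra hd
  have h1 := h (-d / (|e| + 1))
  have hpos : 0 < |e| + 1 := by positivity
  have h2 : 2 * (-d / (|e| + 1)) * d + (-d / (|e| + 1)) ^ 2 * e =
      d ^ 2 * (e - 2 * |e| - 2) / (|e| + 1) ^ 2 := by
    field_simp; ring
  rw [h2] at h1
  have h3 : 0 < d ^ 2 := by positivity
  have h4 : e - 2 * |e| - 2 < 0 := by
    have := le_abs_self e
    have := abs_nonneg e
    linarith
  have h5 : d ^ 2 * (e - 2 * |e| - 2) / (|e| + 1) ^ 2 < 0 :=
    div_neg_of_neg_of_pos (mul_neg_of_pos_of_neg h3 h4) (by positivity)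
  linarith

/-- Euler-Lagrange equation tested with `η w`. -/
lemma euler_lagrange (hN : 5 ≤ N) (hk2 : k ≤ N - 2) (hσ : σ ∈ Set.Ioo (0 : ℝ) 2)
    (hw : GroundState N k σ w) {η : Euc N → ℝ} {V : Euc N → Euc N} (W : Wt N η V) :
    ∫ x, inner ℝ (gradient w x) (η x • gradient w x + w x • V x) =
      Sconst N k σ * ∫ x, η x ∂(muW N k σ w) := by
  have := mu_prob hw
  obtain ⟨φ, A⟩ := exists_approx hN hk2 hσ hw
  obtain ⟨C, hC⟩ := W.bdd
  set μ := muW N k σ w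
  have mH := (A.mul_weight hN W).gm
  have mg := A.gm
  set H : Euc N → Euc N := fun x => η x • gradient w x + w x • V x with hH
  have hηc := W.smooth.continuous
  have I1 : Integrable η μ := by
    refine Integrable.of_bound hηc.aestronglyMeasurable C (Eventually.of_forall hC)
  have I2 : Integrable (fun x => η x ^ 2) μ := by
    refine Integrable.of_bound (hηc.pow 2).aestronglyMeasurable (C ^ 2)
      (Eventually.of_forall fun x => ?_)
    rw [Real.norm_of_nonneg (sq_nonneg _), ← sq_abs]
    exact pow_le_pow_left₀ (abs_nonneg _) (hC x) 2
  refine sub_eq_zero.1 (quad_zero (e := (∫ x, ‖H x‖ ^ 2) - Sconst N k σ * ∫ x, η x ^ 2 ∂μ) ?_)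
  intro ε
  have h1 := tail hN hk2 hσ hw (W.affine ε) univ MeasurableSet.univ
  have e0 : ∀ x, (1 + ε * η x) • gradient w x + w x • (ε • V x) = gradient w x + ε • H x := by
    intro x
    simp only [hH]
    module
  simp_rw [e0] at h1
  rw [Measure.restrict_univ, probReal_univ, Real.one_rpow, one_mul] at h1
  have e1 : ∫ x, (1 + ε * η x) ^ 2 ∂μ = 1 + 2 * ε * ∫ x, η x ∂μ + ε ^ 2 * ∫ x, η x ^ 2 ∂μ := by
    have : ∀ x, (1 + ε * η x) ^ 2 = 1 + 2 * ε * η x + ε ^ 2 * η x ^ 2 := fun x => by ring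
    simp_rw [this]
    have K : Integrable (fun x => 1 + 2 * ε * η x) μ := (integrable_const _).add (I1.const_mul _)
    rw [integral_add K (I2.const_mul _),
      integral_add (integrable_const _) (I1.const_mul _), integral_const_mul, integral_const_mul]
    simp
  have e2 : ∫ x, ‖gradient w x + ε • H x‖ ^ 2 = Sconst N k σ +
      2 * ε * (∫ x, inner ℝ (gradient w x) (H x)) + ε ^ 2 * ∫ x, ‖H x‖ ^ 2 := by
    have : ∀ x, ‖gradient w x + ε • H x‖ ^ 2 = ‖gradient w x‖ ^ 2 +
        2 * ε * inner ℝ (gradient w x) (H x) + ε ^ 2 * ‖H x‖ ^ 2 := by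
      intro x
      rw [norm_add_sq_real, norm_smul, inner_smul_right, mul_pow, Real.norm_eq_abs, sq_abs]; ring
    simp_rw [this]
    have J0 := mg.integrable_norm_pow (by simp)
    have J1 := memLp_integrable_inner mg mH
    have J2 := mH.integrable_norm_pow (by simp)
    simp only [ENNReal.toReal_ofNat, Nat.cast_ofNat] at J0 J2
    have K : Integrable (fun x => ‖gradient w x‖ ^ 2 + 2 * ε * inner ℝ (gradient w x) (H x)) :=
      J0.add (J1.const_mul _)
    rw [integral_add K (J2.const_mul _),
      integral_add J0 (J1.const_mul _), integral_const_mul, integral_const_mul, S_eq hw]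
  rw [e1, e2] at h1
  linarith

end

section
variable {N k : ℕ} {σ : ℝ} {w : Euc N → ℝ}

lemma Wt.mul {η ζ : Euc N → ℝ} {V U : Euc N → Euc N} (W : Wt N η V) (Z : Wt N ζ U) :
    Wt N (fun x => η x * ζ x) (fun x => η x • U x + ζ x • V x) := by
  obtain ⟨C, hC⟩ := W.bdd
  obtain ⟨D, hD⟩ := W.bddV
  obtain ⟨C', hC'⟩ := Z.bdd
  obtain ⟨D', hD'⟩ := Z.bddV
  refine ⟨W.smooth.mul Z.smooth, fun x => hasGradientAt_mul (W.grad x) (Z.grad x),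
    ⟨C * C', fun x => ?_⟩, ⟨C * D' + C' * D, fun x => ?_⟩⟩
  · rw [abs_mul]
    exact mul_le_mul (hC x) (hC' x) (abs_nonneg _) ((abs_nonneg _).trans (hC x))
  · refine (norm_add_le _ _).trans ?_
    rw [norm_smul, norm_smul, Real.norm_eq_abs, Real.norm_eq_abs, add_mul, mul_assoc, mul_assoc]
    exact add_le_add
      (mul_le_mul (hC x) (hD' x) (norm_nonneg _) ((abs_nonneg _).trans (hC x)))
      (mul_le_mul (hC' x) (hD x) (norm_nonneg _) ((abs_nonneg _).trans (hC' x)))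

lemma mu_tail (hw : GroundState N k σ w) {δ : ℝ} (hδ : 0 < δ) :
    ∃ R : ℝ, 0 ≤ R ∧ (muW N k σ w).real (closedBall (0 : Euc N) R)ᶜ ≤ δ := by
  have := mu_prob hw
  set μ := muW N k σ w
  have h := tendsto_measure_iInter_atTop (μ := μ)
    (s := fun n : ℕ => (closedBall (0 : Euc N) n)ᶜ)
    (fun n => measurableSet_closedBall.compl.nullMeasurableSet)
    (fun m n hmn => compl_subset_compl.2 (closedBall_subset_closedBall (by exact_mod_cast hmn)))
    ⟨0, measure_ne_top _ _⟩
  have e : (⋂ n : ℕ, (closedBall (0 : Euc N) n)ᶜ) = ∅ := by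
    rw [← compl_iUnion, iUnion_closedBall_nat, compl_univ]
  rw [e, measure_empty] at h
  obtain ⟨n, hn⟩ := (h.eventually_lt_const (u := ENNReal.ofReal δ) (by simpa using hδ)).exists
  refine ⟨n, by positivity, ?_⟩
  exact ENNReal.toReal_le_of_le_ofReal hδ.le hn.le

lemma sq_integrable {F : Type*} [NormedAddCommGroup F] {f : Euc N → F} (hf : MemLp f 2 volume) :
    Integrable (fun x => ‖f x‖ ^ 2) := by
  have J0 := hf.integrable_norm_pow (by simp)
  simpa using J0

/-- Uniform bound for weights. -/
lemma key_bound (hN : 5 ≤ N) (hk2 : k ≤ N - 2) (hσ : σ ∈ Set.Ioo (0 : ℝ) 2)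
    (hw : GroundState N k σ w) : ∃ B : ℝ, ∀ (ψ : Euc N → ℝ) (V : Euc N → Euc N), Wt N ψ V →
      (∀ x, ‖V x‖ ≤ |ψ x| * qw N x) → (∀ x, ψ x ^ 2 ≤ 1 + ‖x‖ ^ 2) →
      (∫ x, ψ x ^ 2 * w x ^ 2 * (1 + ‖x‖ ^ 2)⁻¹) ≤ B ∧
      (∫ x, ψ x ^ 2 ∂(muW N k σ w)) ≤ B ∧
      (∫ x, ψ x ^ 2 * ‖gradient w x‖ ^ 2) ≤ B := by
  have hprob := mu_prob hw
  obtain ⟨φ, A⟩ := exists_approx hN hk2 hσ hw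
  have hS := S_pos hN hk2 hσ hw
  have hp := twoStar_gt hN hσ
  have hNr : (5 : ℝ) ≤ N := by exact_mod_cast hN
  set S := Sconst N k σ
  set p := twoStar N σ
  set μ := muW N k σ w
  have hexp : 0 < (p - 2) / p := div_pos (by linarith) (by linarith)
  obtain ⟨R, hR0, hR⟩ := mu_tail hw (δ := (1 / 9 : ℝ) ^ (1 / ((p - 2) / p))) (by positivity)
  have hθ : μ.real (closedBall (0 : Euc N) R)ᶜ ^ ((p - 2) / p) ≤ 1 / 9 := by
    calc _ ≤ ((1 / 9 : ℝ) ^ (1 / ((p - 2) / p))) ^ ((p - 2) / p) :=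
          Real.rpow_le_rpow (by positivity) hR hexp.le
      _ = 1 / 9 := by
          rw [← Real.rpow_mul (by norm_num), one_div_mul_cancel hexp.ne', Real.rpow_one]
  set B0 := 9 / 4 * (S * (1 + R ^ 2)) with hB0
  have hB00 : 0 ≤ B0 := by positivity
  refine ⟨max (4 * B0) (B0 / S), fun ψ V W hV hψ => ?_⟩
  have mH := (A.mul_weight hN W).gm
  have mV := A.memLp_smul_V hN W
  obtain ⟨C, hC⟩ := W.bdd
  set Q := ∫ x, ‖ψ x • gradient w x + w x • V x‖ ^ 2 with hQ
  have hQ0 : 0 ≤ Q := integral_nonneg fun x => by positivity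
  have hψc := W.smooth.continuous
  -- integrability
  have Iμ : Integrable (fun x => ψ x ^ 2) μ := by
    refine Integrable.of_bound (hψc.pow 2).aestronglyMeasurable (C ^ 2)
      (Eventually.of_forall fun x => ?_)
    rw [Real.norm_of_nonneg (sq_nonneg _), ← sq_abs]
    exact pow_le_pow_left₀ (abs_nonneg _) (hC x) 2
  have IV : Integrable (fun x => ‖w x • V x‖ ^ 2) := sq_integrable mV
  have IH : Integrable (fun x => ‖ψ x • gradient w x + w x • V x‖ ^ 2) := sq_integrable mH
  -- Hardy
  have hardy := (A.mul_weight hN W).hardy hN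
  simp only [mul_pow] at hardy
  set P := ∫ x, ψ x ^ 2 * w x ^ 2 * (1 + ‖x‖ ^ 2)⁻¹ with hP
  have hP0 : 0 ≤ P := integral_nonneg fun x => by positivity
  have IP : Integrable (fun x => ψ x ^ 2 * w x ^ 2 * (1 + ‖x‖ ^ 2)⁻¹) := by
    have := sq_integrable ((A.mul_weight hN W).memLp_qw hN)
    refine this.congr (Eventually.of_forall fun x => ?_)
    simp only [Real.norm_eq_abs, sq_abs, mul_pow, qw_sq]
  have hP1 : P ≤ 4 / 9 * Q := by
    have h1 : (9 / 4 : ℝ) ≤ (((N : ℝ) - 2) / 2) ^ 2 := by nlinarith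
    have h2 : 9 / 4 * P ≤ (((N : ℝ) - 2) / 2) ^ 2 * P := mul_le_mul_of_nonneg_right h1 hP0
    have h3 : (((N : ℝ) - 2) / 2) ^ 2 * P ≤ Q := hardy
    linarith
  have hVP : (∫ x, ‖w x • V x‖ ^ 2) ≤ P := by
    refine integral_mono IV IP fun x => ?_
    simp only [norm_smul, mul_pow, Real.norm_eq_abs, sq_abs]
    have h1 := pow_le_pow_left₀ (norm_nonneg _) (hV x) 2
    rw [mul_pow, sq_abs, qw_sq] at h1
    have := mul_le_mul_of_nonneg_left h1 (sq_nonneg (w x))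
    linarith
  -- Euler-Lagrange
  have el := euler_lagrange hN hk2 hσ hw (W.mul W)
  have hid : Q = S * (∫ x, ψ x ^ 2 ∂μ) + ∫ x, ‖w x • V x‖ ^ 2 := by
    have I1 : Integrable (fun x => inner ℝ (gradient w x)
        ((ψ x * ψ x) • gradient w x + w x • (ψ x • V x + ψ x • V x))) :=
      memLp_integrable_inner A.gm (A.mul_weight hN (W.mul W)).gm
    have e1 : ∫ x, ψ x ^ 2 ∂μ = ∫ x, ψ x * ψ x ∂μ := by simp_rw [sq]
    rw [e1, ← el, ← integral_add I1 IV, hQ]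
    congr 1
    ext x
    rw [norm_add_sq_real]
    simp only [inner_add_right, inner_smul_right, inner_smul_left, norm_smul, mul_pow,
      real_inner_self_eq_norm_sq, Real.norm_eq_abs, sq_abs, conj_trivial]
    ring
  have htail := tail hN hk2 hσ hw W _ (measurableSet_closedBall (x := (0 : Euc N)) (ε := R)).compl
  have hsplit := integral_add_compl (measurableSet_closedBall (x := (0 : Euc N)) (ε := R)) Iμ
  have hball : ∫ x in closedBall (0 : Euc N) R, ψ x ^ 2 ∂μ ≤ 1 + R ^ 2 := by
    have h1 : ∫ x in closedBall (0 : Euc N) R, ψ x ^ 2 ∂μ ≤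
        ∫ x in closedBall (0 : Euc N) R, (1 + R ^ 2) ∂μ := by
      refine setIntegral_mono_on Iμ.integrableOn (integrable_const _).integrableOn
        measurableSet_closedBall fun x hx => (hψ x).trans ?_
      have : ‖x‖ ≤ R := by simpa using hx
      gcongr
    refine h1.trans ?_
    rw [setIntegral_const, smul_eq_mul]
    have : μ.real (closedBall (0 : Euc N) R) ≤ 1 := measureReal_le_one
    exact mul_le_of_le_one_left (by positivity) this
  have htail2 : S * ∫ x in (closedBall (0 : Euc N) R)ᶜ, ψ x ^ 2 ∂μ ≤ 1 / 9 * Q :=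
    htail.trans (mul_le_mul_of_nonneg_right hθ hQ0)
  have hQB : Q ≤ B0 := by
    have h1 := mul_le_mul_of_nonneg_left hball hS.le
    have h2 : S * (∫ x, ψ x ^ 2 ∂μ) ≤ S * (1 + R ^ 2) + 1 / 9 * Q := by
      rw [← hsplit, mul_add]; linarith
    linarith
  have hV0 : 0 ≤ ∫ x, ‖w x • V x‖ ^ 2 := integral_nonneg fun x => by positivity
  refine ⟨?_, ?_, ?_⟩
  · exact le_max_of_le_left (by linarith)
  · refine le_max_of_le_right ?_
    rw [le_div_iff₀ hS]
    linarith
  · refine le_max_of_le_left ?_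
    have h1 : (∫ x, ψ x ^ 2 * ‖gradient w x‖ ^ 2) ≤
        ∫ x, (2 * ‖ψ x • gradient w x + w x • V x‖ ^ 2 + 2 * ‖w x • V x‖ ^ 2) := by
      refine integral_mono_of_nonneg (Eventually.of_forall fun x => by positivity)
        ((IH.const_mul _).add (IV.const_mul _)) (Eventually.of_forall fun x => ?_)
      have h2 := norm_sub_le (ψ x • gradient w x + w x • V x) (w x • V x)
      rw [add_sub_cancel_right] at h2
      have h3 : ψ x ^ 2 * ‖gradient w x‖ ^ 2 = ‖ψ x • gradient w x‖ ^ 2 := by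
        rw [norm_smul, mul_pow, Real.norm_eq_abs, sq_abs]
      simp only
      rw [h3]
      have h4 := pow_le_pow_left₀ (norm_nonneg _) h2 2
      nlinarith [sq_nonneg (‖ψ x • gradient w x + w x • V x‖ - ‖w x • V x‖)]
    rw [integral_add (IH.const_mul _) (IV.const_mul _), integral_const_mul,
      integral_const_mul] at h1
    linarith

/-- Fatou -/
lemma fatou_integrable {α : Type*} [MeasurableSpace α] {μ : Measure α} {f : ℕ → α → ℝ}
    {g : α → ℝ} {B : ℝ} (h0 : ∀ n x, 0 ≤ f n x) (hI : ∀ n, Integrable (f n) μ)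
    (hB : ∀ n, ∫ x, f n x ∂μ ≤ B) (hlim : ∀ x, Tendsto (fun n => f n x) atTop (nhds (g x))) :
    Integrable g μ := by
  have hgm : AEStronglyMeasurable g μ :=
    aestronglyMeasurable_of_tendsto_ae atTop (fun n => (hI n).1) (Eventually.of_forall hlim)
  have hg0 : ∀ x, 0 ≤ g x := fun x => ge_of_tendsto' (hlim x) fun n => h0 n x
  refine ⟨hgm, ?_⟩
  rw [hasFiniteIntegral_iff_ofReal (Eventually.of_forall hg0)]
  have h1 : ∀ x, ENNReal.ofReal (g x) = liminf (fun n => ENNReal.ofReal (f n x)) atTop := fun x =>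
    ((ENNReal.continuous_ofReal.tendsto _).comp (hlim x)).liminf_eq.symm
  simp_rw [h1]
  refine (lintegral_liminf_le' fun n => (hI n).1.aemeasurable.ennreal_ofReal).trans_lt ?_
  refine lt_of_le_of_lt (b := ENNReal.ofReal B) ?_ (by simp)
  refine liminf_le_of_le (by isBoundedDefault) fun b hb => ?_
  obtain ⟨n, hn⟩ := hb.exists
  refine hn.trans ?_
  rw [← ofReal_integral_eq_lintegral_ofReal (hI n) (Eventually.of_forall (h0 n))]
  exact ENNReal.ofReal_le_ofReal (hB n)

end

section
variable {N k : ℕ} {σ : ℝ} {w : Euc N → ℝ}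

lemma hasGradientAt_radial {h : ℝ → ℝ} {h' : ℝ} {x : Euc N} (hd : HasDerivAt h h' (‖x‖ ^ 2)) :
    HasGradientAt (fun y : Euc N => h (‖y‖ ^ 2)) ((2 * h') • x) x := by
  rw [hasGradientAt_iff_hasFDerivAt]
  have h1 := (hasStrictFDerivAt_norm_sq x).hasFDerivAt
  have h2 := hd.comp_hasFDerivAt x h1
  refine h2.congr_fderiv ?_
  ext y
  simp
  ring

/-- first weight -/
def psiW (N : ℕ) (ε : ℝ) (x : Euc N) : ℝ := Real.sqrt ((1 + ‖x‖ ^ 2) / (1 + ε * (1 + ‖x‖ ^ 2)))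

lemma psiW_sq {ε : ℝ} (hε : 0 < ε) (x : Euc N) :
    psiW N ε x ^ 2 = (1 + ‖x‖ ^ 2) / (1 + ε * (1 + ‖x‖ ^ 2)) := by
  unfold psiW
  exact Real.sq_sqrt (by positivity)

lemma psiW_pos {ε : ℝ} (hε : 0 < ε) (x : Euc N) : 0 < psiW N ε x := by
  unfold psiW
  exact Real.sqrt_pos.2 (by positivity)

lemma psiW_wt {ε : ℝ} (hε : 0 < ε) : ∃ V, Wt N (psiW N ε) V ∧
    ∀ x, ‖V x‖ ≤ |psiW N ε x| * qw N x := by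
  have hb : ∀ x : Euc N, |psiW N ε x| ≤ Real.sqrt (1 / ε) := by
    intro x
    rw [abs_of_pos (psiW_pos hε x)]
    refine Real.sqrt_le_sqrt ?_
    rw [div_le_div_iff₀ (by positivity) hε]
    nlinarith [sq_nonneg ‖x‖]
  have hV : ∀ x : Euc N, ‖((psiW N ε x)⁻¹ * ((1 + ε * (1 + ‖x‖ ^ 2)) ^ 2)⁻¹) • x‖ ≤
      |psiW N ε x| * qw N x := by
    intro x
    have hp := psiW_pos hε x
    have hq := qw_pos x
    rw [abs_of_pos hp]
    refine le_of_sq_le_sq ?_ (by positivity)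
    rw [norm_smul, mul_pow, mul_pow, Real.norm_eq_abs, sq_abs, mul_pow, inv_pow, psiW_sq hε, qw_sq]
    have h1 : 0 < 1 + ‖x‖ ^ 2 := by positivity
    have h2 : 1 ≤ 1 + ε * (1 + ‖x‖ ^ 2) := by
      have : 0 < ε * (1 + ‖x‖ ^ 2) := by positivity
      linarith
    set s := 1 + ‖x‖ ^ 2 with hs
    have h3 : ‖x‖ ^ 2 ≤ s := by linarith
    set q := 1 + ε * s
    have hq0 : 0 < q := by linarith
    have e1 : (s / q)⁻¹ * (q ^ 2)⁻¹ ^ 2 * ‖x‖ ^ 2 = (‖x‖ ^ 2 / s) * (1 / q ^ 2) * (1 / q) := by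
      field_simp
    have e2 : s / q * s⁻¹ = 1 * 1 * (1 / q) := by field_simp
    rw [e1, e2]
    gcongr
    · exact (div_le_one h1).2 h3
    · rw [div_le_one (by positivity)]
      exact one_le_pow₀ h2
  refine ⟨fun x => ((psiW N ε x)⁻¹ * ((1 + ε * (1 + ‖x‖ ^ 2)) ^ 2)⁻¹) • x, ⟨?_, ?_, ⟨_, hb⟩,
    ⟨_, fun x => (hV x).trans (mul_le_mul_of_nonneg_right (hb x) (qw_pos x).le)⟩⟩, hV⟩
  · unfold psiW
    refine ContDiff.sqrt ?_ fun x => by positivity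
    refine ContDiff.div ?_ ?_ fun x => by positivity
    · exact contDiff_const.add (contDiff_norm_sq ℝ)
    · exact contDiff_const.add (contDiff_const.mul (contDiff_const.add (contDiff_norm_sq ℝ)))
  · intro x
    have hq : (1 + ε * (1 + ‖x‖ ^ 2)) ≠ 0 := by positivity
    have hq2 : (1 + ‖x‖ ^ 2) / (1 + ε * (1 + ‖x‖ ^ 2)) ≠ 0 := by positivity
    have d1 : HasDerivAt (fun r : ℝ => 1 + r) 1 (‖x‖ ^ 2) := (hasDerivAt_id _).const_add 1
    have d2 := ((d1.const_mul ε).const_add 1)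
    have d4 : HasDerivAt (fun r : ℝ => (1 + r) / (1 + ε * (1 + r))) _ (‖x‖ ^ 2) := d1.div d2 hq
    have d3 := d4.sqrt hq2
    have := hasGradientAt_radial d3
    unfold psiW
    convert this using 2
    have hs : Real.sqrt ((1 + ‖x‖ ^ 2) / (1 + ε * (1 + ‖x‖ ^ 2))) ≠ 0 := (psiW_pos hε x).ne'
    field_simp
    ring

def en (n : ℕ) : ℝ := 1 / ((n : ℝ) + 1)
lemma en_pos (n : ℕ) : 0 < en n := by unfold en; positivity
lemma en_le (n : ℕ) : en n ≤ 1 := by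
  unfold en; rw [div_le_one (by positivity)]; linarith [Nat.cast_nonneg (α := ℝ) n]
lemma en_lim : Tendsto en atTop (nhds 0) := tendsto_one_div_add_atTop_nhds_zero_nat

lemma lim_aux (a : ℝ) : Tendsto (fun n => (1 + en n * a)⁻¹) atTop (nhds 1) := by
  have h1 : Tendsto (fun n => 1 + en n * a) atTop (nhds (1 + 0 * a)) :=
    (en_lim.mul_const a).const_add 1
  have h2 := h1.inv₀ (by simp)
  simpa using h2

/-- the integrability facts -/
lemma decay (hN : 5 ≤ N) (hk2 : k ≤ N - 2) (hσ : σ ∈ Set.Ioo (0 : ℝ) 2)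
    (hw : GroundState N k σ w) :
    Integrable (fun x => w x ^ 2) ∧ Integrable (fun x => ‖x‖ ^ 2) (muW N k σ w) ∧
      Integrable (fun x => ‖x‖ ^ 2 * ‖gradient w x‖ ^ 2) := by
  obtain ⟨B, hB⟩ := key_bound hN hk2 hσ hw
  have hprob := mu_prob hw
  obtain ⟨φ, A⟩ := exists_approx hN hk2 hσ hw
  choose V hW hV using fun n => psiW_wt (N := N) (en_pos n)
  have hle : ∀ n (x : Euc N), psiW N (en n) x ^ 2 ≤ 1 + ‖x‖ ^ 2 := fun n x => by
    rw [psiW_sq (en_pos n)]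
    refine div_le_self (by positivity) ?_
    have := en_pos n
    have : 0 < en n * (1 + ‖x‖ ^ 2) := by positivity
    linarith
  have hK := fun n => hB _ _ (hW n) (hV n) (hle n)
  have hlim : ∀ x : Euc N, Tendsto (fun n => psiW N (en n) x ^ 2) atTop (nhds (1 + ‖x‖ ^ 2)) := by
    intro x
    simp_rw [psiW_sq (en_pos _), div_eq_mul_inv]
    simpa using (lim_aux (1 + ‖x‖ ^ 2)).const_mul (1 + ‖x‖ ^ 2)
  have hC := fun n => (hW n).bdd
  choose C hC using hC
  have hC2 : ∀ n x, |psiW N (en n) x ^ 2| ≤ C n ^ 2 := fun n x => by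
    rw [abs_of_nonneg (sq_nonneg _), ← sq_abs]
    exact pow_le_pow_left₀ (abs_nonneg _) (hC n x) 2
  refine ⟨?_, ?_, ?_⟩
  · refine fatou_integrable (f := fun n x => psiW N (en n) x ^ 2 * w x ^ 2 * (1 + ‖x‖ ^ 2)⁻¹)
      (fun n x => by positivity) (fun n => ?_) (fun n => (hK n).1) fun x => ?_
    · have := sq_integrable ((A.mul_weight hN (hW n)).memLp_qw hN)
      refine this.congr (Eventually.of_forall fun x => ?_)
      simp only [Real.norm_eq_abs, sq_abs, mul_pow, qw_sq]
    · have := ((hlim x).mul_const (w x ^ 2)).mul_const (1 + ‖x‖ ^ 2)⁻¹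
      convert this using 2
      have : 1 + ‖x‖ ^ 2 ≠ 0 := by positivity
      field_simp
  · have h1 : Integrable (fun x : Euc N => 1 + ‖x‖ ^ 2) (muW N k σ w) := by
      refine fatou_integrable (f := fun n x => psiW N (en n) x ^ 2)
        (fun n x => by positivity) (fun n => ?_) (fun n => (hK n).2.1) hlim
      exact Integrable.of_bound ((hW n).smooth.continuous.pow 2).aestronglyMeasurable (C n ^ 2)
        (Eventually.of_forall (hC2 n))
    refine h1.mono' (by fun_prop) (Eventually.of_forall fun x => ?_)
    rw [Real.norm_of_nonneg (by positivity)]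
    linarith
  · have h1 : Integrable (fun x => (1 + ‖x‖ ^ 2) * ‖gradient w x‖ ^ 2) := by
      refine fatou_integrable (f := fun n x => psiW N (en n) x ^ 2 * ‖gradient w x‖ ^ 2)
        (fun n x => by positivity) (fun n => ?_) (fun n => (hK n).2.2)
        (fun x => (hlim x).mul_const _)
      exact (sq_integrable A.gm).bdd_mul (c := C n ^ 2)
        ((hW n).smooth.continuous.pow 2).aestronglyMeasurable (Eventually.of_forall (hC2 n))
    refine h1.mono' ?_ (Eventually.of_forall fun x => ?_)
    · exact AEStronglyMeasurable.mul (by fun_prop) (A.gm.1.norm.pow 2)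
    · rw [Real.norm_of_nonneg (by positivity)]
      nlinarith [sq_nonneg ‖gradient w x‖]

/-- The limit of the integration by parts. -/
lemma ibp_lim (hN : 5 ≤ N) (hk2 : k ≤ N - 2) (hσ : σ ∈ Set.Ioo (0 : ℝ) 2)
    (hw : GroundState N k σ w) (i : Fin N) :
    Integrable (fun x => 2 * w x * (gradient w x i * x i)) ∧
    ∫ x, w x ^ 2 = - ∫ x, 2 * w x * (gradient w x i * x i) := by
  obtain ⟨I1, -, I3⟩ := decay hN hk2 hσ hw
  obtain ⟨φ, A⟩ := exists_approx hN hk2 hσ hw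
  have hgi : AEStronglyMeasurable (fun x => gradient w x i) volume :=
    (EuclideanSpace.proj i : Euc N →L[ℝ] ℝ).continuous.comp_aestronglyMeasurable A.gm.1
  have hci : Continuous (fun x : Euc N => x i) :=
    (EuclideanSpace.proj i : Euc N →L[ℝ] ℝ).continuous
  have hbd : ∀ x : Euc N, |2 * w x * (gradient w x i * x i)| ≤
      w x ^ 2 + ‖x‖ ^ 2 * ‖gradient w x‖ ^ 2 := by
    intro x
    have h1 : |gradient w x i| ≤ ‖gradient w x‖ := PiLp.norm_apply_le (gradient w x) i
    have h2 : |x i| ≤ ‖x‖ := PiLp.norm_apply_le x i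
    have h3 : |gradient w x i * x i| ≤ ‖gradient w x‖ * ‖x‖ := by
      rw [abs_mul]
      exact mul_le_mul h1 h2 (abs_nonneg _) (norm_nonneg _)
    rw [abs_mul, abs_mul, abs_two]
    have h4 := mul_le_mul_of_nonneg_left h3 (abs_nonneg (w x))
    nlinarith [sq_nonneg (|w x| - ‖gradient w x‖ * ‖x‖), sq_abs (w x)]
  have hθ1 : ∀ n (x : Euc N), 0 < (1 + en n * ‖x‖ ^ 2)⁻¹ := fun n x => by
    have := en_pos n
    positivity
  have hθ2 : ∀ n (x : Euc N), (1 + en n * ‖x‖ ^ 2)⁻¹ ≤ 1 := fun n x => by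
    have := en_pos n
    refine inv_le_one_of_one_le₀ ?_
    have : 0 ≤ en n * ‖x‖ ^ 2 := by positivity
    linarith
  have hcθ : ∀ n, Continuous (fun x : Euc N => (1 + en n * ‖x‖ ^ 2)⁻¹) := fun n =>
    Continuous.inv₀ (by fun_prop) (fun x => by have := en_pos n; positivity)
  have IJ : Integrable (fun x => w x ^ 2 + ‖x‖ ^ 2 * ‖gradient w x‖ ^ 2) := I1.add I3
  refine ⟨IJ.mono' ((A.wm.const_mul 2).mul (hgi.mul hci.aestronglyMeasurable))
    (Eventually.of_forall hbd), ?_⟩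
  have hib := fun n => A.ibp hN 1 (en n) one_pos (en_pos n) i
  have L1 : Tendsto (fun n => ∫ x, w x ^ 2 * ((1 + en n * ‖x‖ ^ 2)⁻¹ -
      2 * en n * x i ^ 2 * ((1 + en n * ‖x‖ ^ 2)⁻¹) ^ 2)) atTop (nhds (∫ x, w x ^ 2)) := by
    refine tendsto_integral_of_dominated_convergence (fun x => w x ^ 2 * 3) (fun n => ?_)
      (I1.mul_const _) (fun n => Eventually.of_forall fun x => ?_)
      (Eventually.of_forall fun x => ?_)
    · exact (A.wm.pow 2).mul (((hcθ n).sub (((hci.pow 2).const_mul _).mul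
        ((hcθ n).pow 2))).aestronglyMeasurable)
    · rw [norm_mul, Real.norm_of_nonneg (sq_nonneg _)]
      refine mul_le_mul_of_nonneg_left ?_ (sq_nonneg _)
      have h2 : x i ^ 2 ≤ ‖x‖ ^ 2 := by
        rw [← sq_abs]; exact pow_le_pow_left₀ (abs_nonneg _) (PiLp.norm_apply_le x i) 2
      have h3 : en n * x i ^ 2 * (1 + en n * ‖x‖ ^ 2)⁻¹ ≤ 1 := by
        rw [← div_eq_mul_inv, div_le_one (inv_pos.1 (hθ1 n x))]
        have := mul_le_mul_of_nonneg_left h2 (en_pos n).le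
        linarith
      have h4 : 0 ≤ en n * x i ^ 2 * (1 + en n * ‖x‖ ^ 2)⁻¹ := by
        have := en_pos n
        have := hθ1 n x
        positivity
      have e : 2 * en n * x i ^ 2 * ((1 + en n * ‖x‖ ^ 2)⁻¹) ^ 2 =
        2 * (en n * x i ^ 2 * (1 + en n * ‖x‖ ^ 2)⁻¹) * (1 + en n * ‖x‖ ^ 2)⁻¹ := by ring
      rw [e, Real.norm_eq_abs, abs_le]
      have h5 := hθ1 n x
      have h6 := hθ2 n x
      constructor <;> nlinarith
    · have t1 := lim_aux (‖x‖ ^ 2)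
      have t2 := (t1.sub (((en_lim.const_mul 2).mul_const (x i ^ 2)).mul (t1.pow 2))).const_mul
        (w x ^ 2)
      simpa using t2
  have L2 : Tendsto (fun n => ∫ x, 2 * w x * (gradient w x i * (x i * (1 + en n * ‖x‖ ^ 2)⁻¹)))
      atTop (nhds (∫ x, 2 * w x * (gradient w x i * x i))) := by
    refine tendsto_integral_of_dominated_convergence _ (fun n => ?_)
      IJ (fun n => Eventually.of_forall fun x => ?_)
      (Eventually.of_forall fun x => ?_)
    · exact (A.wm.const_mul 2).mul (hgi.mul (hci.mul (hcθ n)).aestronglyMeasurable)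
    · refine le_trans ?_ (hbd x)
      have e : 2 * w x * (gradient w x i * (x i * (1 + en n * ‖x‖ ^ 2)⁻¹)) =
        2 * w x * (gradient w x i * x i) * (1 + en n * ‖x‖ ^ 2)⁻¹ := by ring
      rw [e, Real.norm_eq_abs, abs_mul _ (1 + en n * ‖x‖ ^ 2)⁻¹, abs_of_pos (hθ1 n x)]
      exact mul_le_of_le_one_right (abs_nonneg _) (hθ2 n x)
    · have := (((lim_aux (‖x‖ ^ 2)).const_mul (x i)).const_mul (gradient w x i)).const_mul (2 * w x)
      simpa using this
  simp_rw [hib] at L1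
  exact tendsto_nhds_unique L1 L2.neg

end

section
variable {N k : ℕ} {σ : ℝ} {w : Euc N → ℝ}

/-- projection on the first coordinates -/
def tproj (N k : ℕ) (x : Euc N) : Euc N :=
  WithLp.toLp 2 fun i : Fin N => if (i : ℕ) < k then x i else 0

lemma tNorm_sq (x : Euc N) :
    tNorm N k x ^ 2 = ∑ i : Fin N, if (i : ℕ) < k then (x i) ^ 2 else 0 := by
  unfold tNorm
  rw [Real.sq_sqrt]
  exact Finset.sum_nonneg fun i _ => by split_ifs <;> positivity

lemma inner_tproj (x y : Euc N) :
    inner ℝ y (tproj N k x) = ∑ i : Fin N, if (i : ℕ) < k then y i * x i else 0 := by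
  rw [PiLp.inner_apply]
  refine Finset.sum_congr rfl fun i _ => ?_
  simp only [tproj]
  split_ifs
  · simp [mul_comm]
  · simp

lemma tNorm_sq_eq (x : Euc N) : tNorm N k x ^ 2 = ‖tproj N k x‖ ^ 2 := by
  rw [tNorm_sq, EuclideanSpace.real_norm_sq_eq]
  refine Finset.sum_congr rfl fun i _ => ?_
  simp only [tproj]
  split_ifs <;> simp

lemma tNorm_sq_le (x : Euc N) : tNorm N k x ^ 2 ≤ ‖x‖ ^ 2 := by
  rw [tNorm_sq, EuclideanSpace.real_norm_sq_eq]
  refine Finset.sum_le_sum fun i _ => ?_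
  split_ifs
  · exact le_rfl
  · positivity

lemma norm_tproj_le (x : Euc N) : ‖tproj N k x‖ ≤ ‖x‖ := by
  have := tNorm_sq_le (k := k) x
  rw [tNorm_sq_eq] at this
  exact le_of_sq_le_sq this (norm_nonneg _)

lemma tNorm_sq_smooth : ContDiff ℝ (⊤ : ℕ∞) (fun x : Euc N => tNorm N k x ^ 2) := by
  simp_rw [tNorm_sq]
  refine ContDiff.sum fun i _ => ?_
  split_ifs
  · exact (EuclideanSpace.proj i : Euc N →L[ℝ] ℝ).contDiff.pow 2
  · exact contDiff_const

lemma tNorm_sq_grad (x : Euc N) :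
    HasGradientAt (fun x : Euc N => tNorm N k x ^ 2) ((2 : ℝ) • tproj N k x) x := by
  rw [hasGradientAt_iff_hasFDerivAt]
  simp_rw [tNorm_sq]
  have h : ∀ i ∈ (Finset.univ : Finset (Fin N)),
      HasFDerivAt (fun y : Euc N => if (i : ℕ) < k then (y i) ^ 2 else 0)
      ((if (i : ℕ) < k then 2 * x i else 0) • (EuclideanSpace.proj i : Euc N →L[ℝ] ℝ)) x := by
    intro i _
    split_ifs
    · have h1 : HasFDerivAt (fun y : Euc N => y i) (EuclideanSpace.proj i : Euc N →L[ℝ] ℝ) x :=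
        (EuclideanSpace.proj i : Euc N →L[ℝ] ℝ).hasFDerivAt
      refine (h1.pow 2).congr_fderiv ?_
      ext y
      simp
    · rw [zero_smul]
      exact hasFDerivAt_const _ _
  refine (HasFDerivAt.fun_sum h).congr_fderiv ?_
  ext y
  rw [InnerProductSpace.toDual_apply_apply, real_inner_comm, inner_smul_right, inner_tproj,
    Finset.mul_sum, ContinuousLinearMap.sum_apply]
  refine Finset.sum_congr rfl fun i _ => ?_
  split_ifs
  · simp; ring
  · simp

/-- gradient of the second weight -/
def etaV (N k : ℕ) (ε : ℝ) (x : Euc N) : Euc N :=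
  tNorm N k x ^ 2 • ((2 * (-ε / (1 + ε * ‖x‖ ^ 2) ^ 2)) • x) +
    (1 + ε * ‖x‖ ^ 2)⁻¹ • ((2 : ℝ) • tproj N k x)

lemma etaV_le {ε : ℝ} (hε : 0 < ε) (x : Euc N) :
    ‖etaV N k ε x‖ ≤ 4 * ‖x‖ * (1 + ε * ‖x‖ ^ 2)⁻¹ := by
  unfold etaV
  have hq : 0 < 1 + ε * ‖x‖ ^ 2 := by positivity
  have h0 := tNorm_sq_le (k := k) x
  have h1 := norm_tproj_le (k := k) x
  refine (norm_add_le _ _).trans ?_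
  simp only [norm_smul, Real.norm_eq_abs, abs_mul, abs_div, abs_neg, abs_two, abs_pow, abs_inv,
    abs_of_pos hq, abs_of_pos hε]
  rw [← abs_pow, abs_of_nonneg (sq_nonneg (tNorm N k x))]
  set q := 1 + ε * ‖x‖ ^ 2 with hqd
  have h2 : ε * tNorm N k x ^ 2 / q ≤ 1 := by
    rw [div_le_one hq]
    have := mul_le_mul_of_nonneg_left h0 hε.le
    linarith
  have e1 : tNorm N k x ^ 2 * (2 * (ε / q ^ 2) * ‖x‖) = 2 * (ε * tNorm N k x ^ 2 / q) * (‖x‖ * q⁻¹) := by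
    field_simp
  rw [e1]
  have h3 : 0 ≤ ‖x‖ * q⁻¹ := by positivity
  have h4 := mul_le_mul_of_nonneg_right h2 h3
  have h5 := mul_le_mul_of_nonneg_left h1 (inv_pos.2 hq).le
  linarith

lemma eta_wt {ε : ℝ} (hε : 0 < ε) (hε1 : ε ≤ 1) :
    Wt N (fun x => tNorm N k x ^ 2 * (1 + ε * ‖x‖ ^ 2)⁻¹) (etaV N k ε) := by
  have hq : ∀ x : Euc N, 0 < 1 + ε * ‖x‖ ^ 2 := fun x => by positivity
  refine ⟨?_, fun x => ?_, ⟨1 / ε, fun x => ?_⟩, ⟨4 / ε, fun x => ?_⟩⟩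
  · refine tNorm_sq_smooth.mul (ContDiff.inv ?_ fun x => (hq x).ne')
    exact contDiff_const.add (contDiff_const.mul (contDiff_norm_sq ℝ))
  · refine hasGradientAt_mul (tNorm_sq_grad x) ?_
    have d1 : HasDerivAt (fun r : ℝ => 1 + ε * r) ε (‖x‖ ^ 2) := by
      simpa using ((hasDerivAt_id (‖x‖ ^ 2)).const_mul ε).const_add 1
    have d2 : HasDerivAt (fun r : ℝ => (1 + ε * r)⁻¹) _ (‖x‖ ^ 2) := d1.inv (hq x).ne'
    exact hasGradientAt_radial d2
  · have := hq x
    rw [abs_of_nonneg (by positivity), ← div_eq_mul_inv, div_le_div_iff₀ this hε]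
    have := mul_le_mul_of_nonneg_left (tNorm_sq_le (k := k) x) hε.le
    linarith
  · refine (etaV_le hε x).trans ?_
    have h1 : (1 + ε * ‖x‖ ^ 2)⁻¹ ≤ (1 / ε) * qw N x ^ 2 := by
      rw [qw_sq, one_div, ← mul_inv]
      refine inv_anti₀ (by positivity) ?_
      nlinarith [sq_nonneg ‖x‖]
    have h2 := norm_mul_qw_le x
    have h3 := qw_pos x
    calc 4 * ‖x‖ * (1 + ε * ‖x‖ ^ 2)⁻¹ ≤ 4 * ‖x‖ * ((1 / ε) * qw N x ^ 2) := by gcongr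
      _ = 4 / ε * qw N x * (‖x‖ * qw N x) := by ring
      _ ≤ 4 / ε * qw N x * 1 := by gcongr
      _ = _ := by ring

/-- limit of the Euler-Lagrange equation -/
lemma el_lim (hN : 5 ≤ N) (hk2 : k ≤ N - 2) (hσ : σ ∈ Set.Ioo (0 : ℝ) 2)
    (hw : GroundState N k σ w) :
    ∫ x, (tNorm N k x ^ 2 * ‖gradient w x‖ ^ 2 + 2 * w x * inner ℝ (gradient w x) (tproj N k x)) =
      Sconst N k σ * ∫ x, tNorm N k x ^ 2 ∂(muW N k σ w) := by
  obtain ⟨I1, I2, I3⟩ := decay hN hk2 hσ hw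
  obtain ⟨φ, A⟩ := exists_approx hN hk2 hσ hw
  have hW := fun n => eta_wt (N := N) (k := k) (en_pos n) (en_le n)
  have hel := fun n => euler_lagrange hN hk2 hσ hw (hW n)
  have hθ1 : ∀ n (x : Euc N), 0 < (1 + en n * ‖x‖ ^ 2)⁻¹ := fun n x => by
    have := en_pos n
    positivity
  have hθ2 : ∀ n (x : Euc N), (1 + en n * ‖x‖ ^ 2)⁻¹ ≤ 1 := fun n x => by
    have := en_pos n
    refine inv_le_one_of_one_le₀ ?_
    have : 0 ≤ en n * ‖x‖ ^ 2 := by positivity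
    linarith
  have hη0 : ∀ n (x : Euc N), 0 ≤ tNorm N k x ^ 2 * (1 + en n * ‖x‖ ^ 2)⁻¹ := fun n x =>
    mul_nonneg (sq_nonneg _) (hθ1 n x).le
  have hη : ∀ n (x : Euc N), tNorm N k x ^ 2 * (1 + en n * ‖x‖ ^ 2)⁻¹ ≤ ‖x‖ ^ 2 := fun n x =>
    (mul_le_of_le_one_right (sq_nonneg _) (hθ2 n x)).trans (tNorm_sq_le x)
  have hV : ∀ n (x : Euc N), ‖etaV N k (en n) x‖ ≤ 4 * ‖x‖ := fun n x =>
    (etaV_le (en_pos n) x).trans (mul_le_of_le_one_right (by positivity) (hθ2 n x))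
  have R : Tendsto (fun n => ∫ x, tNorm N k x ^ 2 * (1 + en n * ‖x‖ ^ 2)⁻¹ ∂(muW N k σ w)) atTop
      (nhds (∫ x, tNorm N k x ^ 2 ∂(muW N k σ w))) := by
    refine tendsto_integral_of_dominated_convergence _
      (fun n => (hW n).smooth.continuous.aestronglyMeasurable) I2
      (fun n => Eventually.of_forall fun x => ?_) (Eventually.of_forall fun x => ?_)
    · rw [Real.norm_of_nonneg (hη0 n x)]
      exact hη n x
    · simpa using (lim_aux (‖x‖ ^ 2)).const_mul (tNorm N k x ^ 2)
  have L : Tendsto (fun n => ∫ x, inner ℝ (gradient w x)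
      ((tNorm N k x ^ 2 * (1 + en n * ‖x‖ ^ 2)⁻¹) • gradient w x + w x • etaV N k (en n) x)) atTop
      (nhds (∫ x, (tNorm N k x ^ 2 * ‖gradient w x‖ ^ 2 +
        2 * w x * inner ℝ (gradient w x) (tproj N k x)))) := by
    refine tendsto_integral_of_dominated_convergence
      (fun x => 2 * w x ^ 2 + 3 * (‖x‖ ^ 2 * ‖gradient w x‖ ^ 2)) (fun n => ?_)
      ((I1.const_mul _).add (I3.const_mul _))
      (fun n => Eventually.of_forall fun x => ?_) (Eventually.of_forall fun x => ?_)
    · exact A.gm.1.inner (A.mul_weight hN (hW n)).gm.1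
    · refine (norm_inner_le_norm _ _).trans ?_
      have h1 : ‖(tNorm N k x ^ 2 * (1 + en n * ‖x‖ ^ 2)⁻¹) • gradient w x +
          w x • etaV N k (en n) x‖ ≤ ‖x‖ ^ 2 * ‖gradient w x‖ + |w x| * (4 * ‖x‖) := by
        refine (norm_add_le _ _).trans ?_
        rw [norm_smul, norm_smul, Real.norm_of_nonneg (hη0 n x), Real.norm_eq_abs]
        gcongr
        · exact hη n x
        · exact hV n x
      have h2 := mul_le_mul_of_nonneg_left h1 (norm_nonneg (gradient w x))
      nlinarith [sq_nonneg (|w x| - ‖x‖ * ‖gradient w x‖), sq_abs (w x)]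
    · have t1 := lim_aux (‖x‖ ^ 2)
      have tA := (t1.const_mul (tNorm N k x ^ 2)).smul_const (gradient w x)
      have tB : Tendsto (fun n => etaV N k (en n) x) atTop (nhds ((2 : ℝ) • tproj N k x)) := by
        unfold etaV
        have h1 := (((en_lim.neg.mul (t1.pow 2)).const_mul 2).smul_const x).const_smul
          (tNorm N k x ^ 2)
        have h2 := t1.smul_const ((2 : ℝ) • tproj N k x)
        have h3 := h1.add h2
        simpa [div_eq_mul_inv] using h3
      have tC := tA.add (tB.const_smul (w x))
      have tD := (tendsto_const_nhds (x := gradient w x)).inner (𝕜 := ℝ) tC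
      convert tD using 2
      simp only [inner_add_right, inner_smul_right, real_inner_self_eq_norm_sq]
      ring
  simp_rw [hel] at L
  exact tendsto_nhds_unique L (R.const_mul _)

lemma ibp_sum (hN : 5 ≤ N) (hk2 : k ≤ N - 2) (hσ : σ ∈ Set.Ioo (0 : ℝ) 2)
    (hw : GroundState N k σ w) :
    Integrable (fun x => 2 * w x * inner ℝ (gradient w x) (tproj N k x)) ∧
    ∫ x, 2 * w x * inner ℝ (gradient w x) (tproj N k x) = - ((k : ℝ) * ∫ x, w x ^ 2) := by
  have h := fun i => ibp_lim hN hk2 hσ hw i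
  have e : (fun x => 2 * w x * inner ℝ (gradient w x) (tproj N k x)) = fun x =>
      ∑ i : Fin N, if (i : ℕ) < k then 2 * w x * (gradient w x i * x i) else 0 := by
    ext x
    rw [inner_tproj, Finset.mul_sum]
    refine Finset.sum_congr rfl fun i _ => ?_
    split_ifs <;> simp
  have hI : ∀ i ∈ (Finset.univ : Finset (Fin N)), Integrable
      (fun x => if (i : ℕ) < k then 2 * w x * (gradient w x i * x i) else 0) := by
    intro i _
    split_ifs
    · exact (h i).1
    · exact integrable_zero _ _ _
  rw [e]
  refine ⟨integrable_finset_sum _ hI, ?_⟩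
  rw [integral_finset_sum _ hI]
  have e2 : ∀ i : Fin N, ∫ x, (if (i : ℕ) < k then 2 * w x * (gradient w x i * x i) else 0) =
      if (i : ℕ) < k then - ∫ x, w x ^ 2 else 0 := by
    intro i
    split_ifs
    · rw [(h i).2, neg_neg]
    · simp
  simp_rw [e2]
  rw [Fin.sum_univ_eq_sum_range (fun i => if i < k then - ∫ x, w x ^ 2 else 0) N,
    ← Finset.sum_filter]
  have e3 : (Finset.range N).filter (· < k) = Finset.range k := by
    ext i; simp; omega
  rw [e3]
  simp

end

/-- Pohozaev-type identity in the `t`-variable: for `N ≥ 5`,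
`1 ≤ k ≤ N-2`, `σ ∈ (0,2)` and a positive ground state `w` for `S_{N,σ}`, the integrals
`∫ |t|²|∇w|²`, `∫ w²`, `∫ |t|²|z|^{-σ} w^{2*_σ}` are finite and
`S_{N,σ} ∫ |t|²|z|^{-σ} w^{2*_σ} = ∫ |t|²|∇w|² − k ∫ w²`. -/
theorem statement15 (N k : ℕ) (σ : ℝ) (hN : 5 ≤ N) (hk1 : 1 ≤ k) (hk2 : k ≤ N - 2)
    (hσ : σ ∈ Set.Ioo (0 : ℝ) 2) (w : Euc N → ℝ) (hw : GroundState N k σ w) :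
    Integrable (fun x => tNorm N k x ^ 2 * ‖fderiv ℝ w x‖ ^ 2) ∧
    Integrable (fun x => w x ^ 2) ∧
    Integrable (fun x => tNorm N k x ^ 2 * zNorm N k x ^ (-σ) * w x ^ twoStar N σ) ∧
    Sconst N k σ * ∫ x, tNorm N k x ^ 2 * zNorm N k x ^ (-σ) * w x ^ twoStar N σ =
      (∫ x, tNorm N k x ^ 2 * ‖fderiv ℝ w x‖ ^ 2) - (k : ℝ) * ∫ x, w x ^ 2 := by
  obtain ⟨I1, I2, I3⟩ := decay hN hk2 hσ hw
  obtain ⟨φ, A⟩ := exists_approx hN hk2 hσ hw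
  obtain ⟨J, hJ⟩ := ibp_sum hN hk2 hσ hw
  have hel := el_lim hN hk2 hσ hw
  have hc : Continuous (fun x : Euc N => tNorm N k x ^ 2) := tNorm_sq_smooth.continuous
  have K1 : Integrable (fun x => tNorm N k x ^ 2 * ‖gradient w x‖ ^ 2) := by
    refine I3.mono' (hc.aestronglyMeasurable.mul (A.gm.1.norm.pow 2))
      (Eventually.of_forall fun x => ?_)
    rw [Real.norm_of_nonneg (by positivity)]
    exact mul_le_mul_of_nonneg_right (tNorm_sq_le x) (sq_nonneg _)
  have K2 : Integrable (fun x => tNorm N k x ^ 2) (muW N k σ w) := by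
    refine I2.mono' hc.aestronglyMeasurable (Eventually.of_forall fun x => ?_)
    rw [Real.norm_of_nonneg (by positivity)]
    exact tNorm_sq_le x
  have e : (fun x => tNorm N k x ^ 2 * zNorm N k x ^ (-σ) * w x ^ twoStar N σ) =
      fun x => rhoW N k σ w x * tNorm N k x ^ 2 := by
    ext x; unfold rhoW; ring
  rw [integral_add K1 J, hJ] at hel
  rw [e]
  simp_rw [← norm_gradient_eq]
  refine ⟨K1, I1, (mu_integrable hw _).1 K2, ?_⟩
  rw [← mu_integral hw, ← hel]
  ring
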